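/- arXiv:0902.0275 — 9 statements merged into one kernel-verified Lean document; each statement's English description precedes it below -/
import Mathlib

section
/- Let T > 0 and let u : ℝ × (0,T) → ℝ be a smooth solution of the third-order nonlinear dispersion equation u_t = (u u_x)_{xx} whose support in x is contained in a fixed compact interval for every t ∈ (0,T). Then for every t ∈ (0,T) the two energy identities hold: (d/dt) ∫_ℝ u(x,t)² dx = − ∫_ℝ (u_x(x,t))³ dx and (d/dt) ∫_ℝ (u_x(x,t))² dx = −5 ∫_ℝ u_x(x,t) (u_{xx}(x,t))² dx. -/
open Set Filter MeasureTheory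

noncomputable def nde_D (v : ℝ × ℝ) (G : ℝ × ℝ → ℝ) : ℝ × ℝ → ℝ := fun p => fderiv ℝ G p v

lemma nde_D_smooth (v : ℝ × ℝ) {G : ℝ × ℝ → ℝ} (hG : ContDiff ℝ (⊤ : ℕ∞) G) :
    ContDiff ℝ (⊤ : ℕ∞) (nde_D v G) := by
  have h : ContDiff ℝ (⊤ : ℕ∞) (fderiv ℝ G) := hG.fderiv_right (by simp)
  exact h.clm_apply contDiff_const

lemma nde_hasDeriv_x {G : ℝ × ℝ → ℝ} (hG : ContDiff ℝ (⊤ : ℕ∞) G) (x s : ℝ) :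
    HasDerivAt (fun y => G (y, s)) (nde_D (1, 0) G (x, s)) x := by
  have h : HasFDerivAt G (fderiv ℝ G (x, s)) (x, s) :=
    ((hG.differentiable (by simp)) (x, s)).hasFDerivAt
  have h2 : HasDerivAt (fun y : ℝ => (y, s)) ((1 : ℝ), (0 : ℝ)) x :=
    (hasDerivAt_id x).prodMk (hasDerivAt_const x s)
  exact h.comp_hasDerivAt x h2

lemma nde_hasDeriv_t {G : ℝ × ℝ → ℝ} (hG : ContDiff ℝ (⊤ : ℕ∞) G) (x s : ℝ) :
    HasDerivAt (fun r => G (x, r)) (nde_D (0, 1) G (x, s)) s := by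
  have h : HasFDerivAt G (fderiv ℝ G (x, s)) (x, s) :=
    ((hG.differentiable (by simp)) (x, s)).hasFDerivAt
  have h2 : HasDerivAt (fun y : ℝ => (x, y)) ((0 : ℝ), (1 : ℝ)) s :=
    (hasDerivAt_const s x).prodMk (hasDerivAt_id s)
  exact h.comp_hasDerivAt s h2

lemma nde_comm {G : ℝ × ℝ → ℝ} (hG : ContDiff ℝ (⊤ : ℕ∞) G) (v w p : ℝ × ℝ) :
    nde_D v (nde_D w G) p = nde_D w (nde_D v G) p := by
  have hd : DifferentiableAt ℝ (fderiv ℝ G) p := by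
    have h : ContDiff ℝ (⊤ : ℕ∞) (fderiv ℝ G) := hG.fderiv_right (by simp)
    exact h.differentiable (by simp) p
  have key : ∀ a b : ℝ × ℝ, nde_D a (nde_D b G) p = fderiv ℝ (fderiv ℝ G) p a b := by
    intro a b
    have h := hd.hasFDerivAt.clm_apply (hasFDerivAt_const b p)
    have h2 : fderiv ℝ (nde_D b G) p = _ := h.fderiv
    simp [nde_D] at h2 ⊢
    rw [h2]; simp
  rw [key, key]
  have hs : IsSymmSndFDerivAt ℝ G p := by
    apply (hG.contDiffAt).isSymmSndFDerivAt
    simp only [minSmoothness_of_isRCLikeNormedField]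
    exact WithTop.coe_le_coe.2 (le_top : (2 : ℕ∞) ≤ ⊤)
  exact hs v w

lemma nde_param {F : ℝ × ℝ → ℝ} (hF : ContDiff ℝ (⊤ : ℕ∞) F) {T R : ℝ}
    (h0 : ∀ t ∈ Ioo 0 T, ∀ x : ℝ, R < |x| → F (x, t) = 0) {t : ℝ} (ht : t ∈ Ioo 0 T) :
    HasDerivAt (fun s => ∫ x : ℝ, F (x, s)) (∫ x : ℝ, nde_D (0, 1) F (x, t)) t := by
  obtain ⟨ε, hε, hball⟩ := Metric.isOpen_iff.1 isOpen_Ioo t ht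
  have hK : IsCompact (Icc (-R) R ×ˢ Metric.closedBall t (ε / 2)) :=
    isCompact_Icc.prod (isCompact_closedBall _ _)
  have hsub : Metric.closedBall t (ε / 2) ⊆ Ioo 0 T :=
    (Metric.closedBall_subset_ball (by linarith)).trans hball
  have hD := nde_D_smooth (0, 1) hF
  obtain ⟨C, hC⟩ := hK.exists_bound_of_continuousOn hD.continuous.continuousOn
  have hD0 : ∀ s ∈ Ioo 0 T, ∀ x : ℝ, R < |x| → nde_D (0, 1) F (x, s) = 0 := by
    intro s hs x hx
    have h1 := nde_hasDeriv_t hF x s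
    have h2 : (fun r => F (x, r)) =ᶠ[nhds s] fun _ => 0 := by
      filter_upwards [isOpen_Ioo.mem_nhds hs] with r hr using h0 r hr x hx
    exact h1.unique ((hasDerivAt_const s (0 : ℝ)).congr_of_eventuallyEq h2)
  refine (hasDerivAt_integral_of_dominated_loc_of_deriv_le
    (F := fun s x => F (x, s)) (F' := fun s x => nde_D (0, 1) F (x, s))
    (bound := (Icc (-R) R).indicator fun _ => C)
    (Metric.closedBall_mem_nhds t (half_pos hε)) ?_ ?_ ?_ ?_ ?_ ?_).2
  · refine Eventually.of_forall fun s => ?_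
    have : Continuous fun x => F (x, s) := hF.continuous.comp (by fun_prop)
    exact this.aestronglyMeasurable
  · have : Continuous fun x => F (x, t) := hF.continuous.comp (by fun_prop)
    refine this.integrable_of_hasCompactSupport ?_
    refine HasCompactSupport.intro (isCompact_Icc (a := -R) (b := R)) fun x hx => h0 t ht x ?_
    by_contra h
    exact hx (abs_le.1 (not_lt.1 h))
  · have : Continuous fun x => nde_D (0, 1) F (x, t) := hD.continuous.comp (by fun_prop)
    exact this.aestronglyMeasurable
  · refine Eventually.of_forall fun x s hs => ?_
    by_cases hx : x ∈ Icc (-R) R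
    · rw [indicator_of_mem hx]; exact hC (x, s) ⟨hx, hs⟩
    · rw [indicator_of_notMem hx, hD0 s (hsub hs) x]
      · simp
      · by_contra h
        exact hx (abs_le.1 (not_lt.1 h))
  · rw [integrable_indicator_iff measurableSet_Icc]
    exact continuousOn_const.integrableOn_Icc
  · exact Eventually.of_forall fun x s _ => nde_hasDeriv_t hF x s

lemma nde_int_zero {g g' : ℝ → ℝ} {R : ℝ} (hg : ∀ x, HasDerivAt g (g' x) x)
    (hc : Continuous g') (h0 : ∀ x, R < |x| → g x = 0) (h0' : ∀ x, R < |x| → g' x = 0) :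
    ∫ x, g' x = 0 := by
  have hi : ∀ f : ℝ → ℝ, Continuous f → (∀ x, R < |x| → f x = 0) → Integrable f := by
    intro f hf h
    refine hf.integrable_of_hasCompactSupport ?_
    refine HasCompactSupport.intro (isCompact_Icc (a := -R) (b := R)) fun x hx => h x ?_
    by_contra h
    exact hx (abs_le.1 (not_lt.1 h))
  have hgc : Continuous g := continuous_iff_continuousAt.2 fun x => (hg x).continuousAt
  exact integral_eq_zero_of_hasDerivAt_of_integrable hg (hi _ hc h0') (hi _ hgc h0)

lemma nde_int {f : ℝ → ℝ} {R : ℝ} (hc : Continuous f) (h : ∀ x, R < |x| → f x = 0) :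
    Integrable f := by
  refine hc.integrable_of_hasCompactSupport ?_
  refine HasCompactSupport.intro (isCompact_Icc (a := -R) (b := R)) fun x hx => h x ?_
  by_contra h
  exact hx (abs_le.1 (not_lt.1 h))

lemma nde_D_zero {G : ℝ × ℝ → ℝ} (hG : ContDiff ℝ (⊤ : ℕ∞) G) {R s : ℝ}
    (h0 : ∀ x : ℝ, R < |x| → G (x, s) = 0) :
    ∀ x : ℝ, R < |x| → nde_D (1, 0) G (x, s) = 0 := by
  intro x hx
  have h1 := nde_hasDeriv_x hG x s
  have h2 : (fun y => G (y, s)) =ᶠ[nhds x] fun _ => 0 := by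
    filter_upwards [(isOpen_lt continuous_const continuous_abs).mem_nhds hx] with y hy
      using h0 y hy
  exact h1.unique ((hasDerivAt_const x (0 : ℝ)).congr_of_eventuallyEq h2)

/-- energy identities for smooth, compactly supported (in x)
solutions of the NDE `u_t = (u u_x)_{xx}` on `ℝ × (0,T)`. -/
theorem stmt0
    (T : ℝ) (hT : 0 < T)
    (u : ℝ → ℝ → ℝ)
    (hsmooth : ContDiff ℝ (⊤ : ℕ∞) (fun p : ℝ × ℝ => u p.1 p.2))
    (R : ℝ) (hR : 0 < R)
    (hsupp : ∀ t ∈ Ioo 0 T, ∀ x : ℝ, R < |x| → u x t = 0)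
    (hpde : ∀ x : ℝ, ∀ t ∈ Ioo 0 T,
      deriv (fun s => u x s) t =
        iteratedDeriv 2 (fun y => u y t * deriv (fun z => u z t) y) x) :
    ∀ t ∈ Ioo 0 T,
      (HasDerivAt (fun s => ∫ x : ℝ, (u x s) ^ 2)
        (-∫ x : ℝ, (deriv (fun y => u y t) x) ^ 3) t) ∧
      (HasDerivAt (fun s => ∫ x : ℝ, (deriv (fun y => u y s) x) ^ 2)
        (-5 * ∫ x : ℝ, deriv (fun y => u y t) x *
          (iteratedDeriv 2 (fun y => u y t) x) ^ 2) t) := by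
  intro t ht
  obtain ⟨U, hU⟩ : ∃ U : ℝ × ℝ → ℝ, U = fun p : ℝ × ℝ => u p.1 p.2 := ⟨_, rfl⟩
  have huU : ∀ x s, u x s = U (x, s) := by intro x s; rw [hU]
  rw [← hU] at hsmooth
  simp only [huU] at hsupp hpde ⊢
  clear hU huU u
  have s1 := nde_D_smooth (1, 0) hsmooth
  have s2 := nde_D_smooth (1, 0) s1
  have s3 := nde_D_smooth (1, 0) s2
  have s4 := nde_D_smooth (1, 0) s3
  have sT := nde_D_smooth (0, 1) hsmooth
  have sTx := nde_D_smooth (1, 0) sT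
  have dx : ∀ s, deriv (fun y => U (y, s)) = fun x => nde_D (1, 0) U (x, s) := fun s =>
    funext fun x => (nde_hasDeriv_x hsmooth x s).deriv
  have d0 := fun x => nde_hasDeriv_x hsmooth x t
  have d1 := fun x => nde_hasDeriv_x s1 x t
  have d2 := fun x => nde_hasDeriv_x s2 x t
  have d3 := fun x => nde_hasDeriv_x s3 x t
  have dT := fun x => nde_hasDeriv_x sT x t
  have z0 := hsupp t ht
  have z1 := nde_D_zero hsmooth z0
  have z2 := nde_D_zero s1 z1
  have dxx : iteratedDeriv 2 (fun y => U (y, t)) =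
      fun x => nde_D (1, 0) (nde_D (1, 0) U) (x, t) := by
    rw [iteratedDeriv_succ, iteratedDeriv_one, dx]
    exact funext fun x => (d1 x).deriv
  simp only [dx, dxx]
  have pde : ∀ x, nde_D (0, 1) U (x, t) =
      U (x, t) * nde_D (1, 0) (nde_D (1, 0) (nde_D (1, 0) U)) (x, t)
      + 3 * nde_D (1, 0) U (x, t) * nde_D (1, 0) (nde_D (1, 0) U) (x, t) := by
    intro x
    have h := hpde x t ht
    rw [(nde_hasDeriv_t hsmooth x t).deriv, dx, iteratedDeriv_succ, iteratedDeriv_one] at h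
    have e1 : deriv (fun y => U (y, t) * nde_D (1, 0) U (y, t)) = fun y =>
        nde_D (1, 0) U (y, t) * nde_D (1, 0) U (y, t)
        + U (y, t) * nde_D (1, 0) (nde_D (1, 0) U) (y, t) :=
      funext fun y => ((d0 y).mul (d1 y)).deriv
    rw [e1] at h
    rw [h]
    refine ((((d1 x).mul (d1 x)).add ((d0 x).mul (d2 x))).deriv).trans ?_
    ring
  have zT : ∀ x, R < |x| → nde_D (0, 1) U (x, t) = 0 := by
    intro x hx; rw [pde, z0 x hx, z1 x hx]; ring
  have cpair : Continuous fun x : ℝ => (x, t) := by fun_prop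
  have c0 := hsmooth.continuous.comp cpair
  have c1 := s1.continuous.comp cpair
  have c2 := s2.continuous.comp cpair
  have c3 := s3.continuous.comp cpair
  have cT := sT.continuous.comp cpair
  have cTx := sTx.continuous.comp cpair
  simp only [Function.comp_def] at c0 c1 c2 c3 cT cTx
  constructor
  · have hp := nde_param (F := fun p => U p ^ 2) (hsmooth.pow 2) (T := T) (R := R)
      (fun s hs x hx => by simp [hsupp s hs x hx]) ht
    convert hp using 1
    have e : ∀ x, nde_D (0, 1) (fun p => U p ^ 2) (x, t)
        = 2 * U (x, t) * nde_D (0, 1) U (x, t) := by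
      intro x
      refine (nde_hasDeriv_t (hsmooth.pow 2) x t).unique ?_
      refine ((nde_hasDeriv_t hsmooth x t).pow 2).congr_deriv ?_
      norm_num
    simp only [e]
    have hz := nde_int_zero (R := R)
      (g := fun x => 2 * U (x, t) * (nde_D (1, 0) U (x, t) * nde_D (1, 0) U (x, t)
        + U (x, t) * nde_D (1, 0) (nde_D (1, 0) U) (x, t))
        - 2 * nde_D (1, 0) U (x, t) * (U (x, t) * nde_D (1, 0) U (x, t))
        + U (x, t) * nde_D (1, 0) U (x, t) ^ 2)
      (g' := fun x => 2 * U (x, t) * nde_D (0, 1) U (x, t) + nde_D (1, 0) U (x, t) ^ 3)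
      (fun x => by
        have h := (((((d0 x).const_mul 2).mul (((d1 x).mul (d1 x)).add ((d0 x).mul (d2 x)))).sub
          (((d1 x).const_mul 2).mul ((d0 x).mul (d1 x)))).add ((d0 x).mul ((d1 x).pow 2)))
        refine h.congr_deriv ?_
        rw [pde]; simp; ring)
      (by fun_prop)
      (fun x hx => by simp [z0 x hx, z1 x hx])
      (fun x hx => by simp [z0 x hx, z1 x hx])
    rw [integral_add (nde_int (R := R) (by fun_prop) (fun x hx => by simp [z0 x hx]))
      (nde_int (R := R) (by fun_prop) (fun x hx => by simp [z1 x hx]))] at hz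
    linarith
  · have hp := nde_param (F := fun p => nde_D (1, 0) U p ^ 2) (s1.pow 2) (T := T) (R := R)
      (fun s hs x hx => by simp [nde_D_zero hsmooth (hsupp s hs) x hx]) ht
    convert hp using 1
    have e : ∀ x, nde_D (0, 1) (fun p => nde_D (1, 0) U p ^ 2) (x, t)
        = 2 * nde_D (1, 0) U (x, t) * nde_D (1, 0) (nde_D (0, 1) U) (x, t) := by
      intro x
      rw [nde_comm hsmooth (1, 0) (0, 1)]
      refine (nde_hasDeriv_t (s1.pow 2) x t).unique ?_
      refine ((nde_hasDeriv_t s1 x t).pow 2).congr_deriv ?_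
      norm_num
    simp only [e]
    have hz := nde_int_zero (R := R)
      (g := fun x => 2 * nde_D (1, 0) U (x, t) * nde_D (0, 1) U (x, t)
        - U (x, t) * nde_D (1, 0) (nde_D (1, 0) U) (x, t) ^ 2)
      (g' := fun x => 2 * nde_D (1, 0) U (x, t) * nde_D (1, 0) (nde_D (0, 1) U) (x, t)
        + 5 * (nde_D (1, 0) U (x, t) * nde_D (1, 0) (nde_D (1, 0) U) (x, t) ^ 2))
      (fun x => by
        have h := (((d1 x).const_mul 2).mul (dT x)).sub ((d0 x).mul ((d2 x).pow 2))
        refine h.congr_deriv ?_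
        rw [pde]; simp; ring)
      (by fun_prop)
      (fun x hx => by simp [z0 x hx, z1 x hx])
      (fun x hx => by simp [z1 x hx])
    rw [integral_add (nde_int (R := R) (by fun_prop) (fun x hx => by simp [z1 x hx]))
      (nde_int (R := R) (by fun_prop) (fun x hx => by simp [z1 x hx])),
      integral_const_mul] at hz
    linarith
end

section
/- Let C > 1, L > 0, T > 0, and let u, v : ℝ × [0,T] → ℝ be smooth functions that are L-periodic in x, satisfy 1/C ≤ u(x,t) ≤ C and 1/C ≤ v(x,t) ≤ C for all (x,t), and both solve the NDE u_t = u u_{xxx} on ℝ × [0,T]. If u(x,0) = v(x,0) for all x, then u ≡ v on ℝ × [0,T]. -/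
open Set Filter

lemma dx_one (f : ℝ → ℝ → ℝ) (hf : ContDiff ℝ (⊤ : ℕ∞) (fun p : ℝ × ℝ => f p.1 p.2)) :
    ∃ g : ℝ → ℝ → ℝ, ContDiff ℝ (⊤ : ℕ∞) (fun p : ℝ × ℝ => g p.1 p.2) ∧
      (∀ x t, HasDerivAt (fun y => f y t) (g x t) x) := by
  refine ⟨fun x t => fderiv ℝ (fun p : ℝ × ℝ => f p.1 p.2) (x, t) (1, 0), ?_, ?_⟩
  · have h1 : ContDiff ℝ (⊤ : ℕ∞) (fderiv ℝ (fun p : ℝ × ℝ => f p.1 p.2)) :=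
      hf.fderiv_right (by simp)
    exact h1.clm_apply contDiff_const
  · intro x t
    have h1 : HasFDerivAt (fun p : ℝ × ℝ => f p.1 p.2)
        (fderiv ℝ (fun p : ℝ × ℝ => f p.1 p.2) (x, t)) (x, t) :=
      ((hf.differentiable (by simp)) (x, t)).hasFDerivAt
    have h2 : HasDerivAt (fun y : ℝ => ((y, t) : ℝ × ℝ)) ((1, 0) : ℝ × ℝ) x :=
      (hasDerivAt_id x).prodMk (hasDerivAt_const x t)
    exact h1.comp_hasDerivAt x h2

lemma per_deriv {L : ℝ} {f g : ℝ → ℝ} (h : ∀ x, HasDerivAt f (g x) x)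
    (hp : ∀ x, f (x + L) = f x) (x : ℝ) : g (x + L) = g x := by
  have h1 : HasDerivAt (fun y => f (y + L)) (g (x + L)) x := (h (x + L)).comp_add_const x L
  have h2 : (fun y => f (y + L)) = f := funext hp
  rw [h2] at h1
  exact h1.unique (h x)

lemma energy_deriv {a b T : ℝ} (hab : a ≤ b) (F F' : ℝ → ℝ → ℝ)
    (hF : ContinuousOn (fun p : ℝ × ℝ => F p.1 p.2) (Icc a b ×ˢ Icc 0 T))
    (hF' : ContinuousOn (fun p : ℝ × ℝ => F' p.1 p.2) (Icc a b ×ˢ Icc 0 T))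
    (hd : ∀ x ∈ Icc a b, ∀ t ∈ Icc (0:ℝ) T, HasDerivAt (fun s => F x s) (F' x t) t) :
    ContinuousOn (fun t => ∫ x in a..b, F x t) (Icc 0 T) ∧
    ∀ t ∈ Ioo (0:ℝ) T, HasDerivAt (fun t => ∫ x in a..b, F x t) (∫ x in a..b, F' x t) t := by
  have hcomp : IsCompact (Icc a b ×ˢ Icc 0 T) := isCompact_Icc.prod isCompact_Icc
  obtain ⟨K, hK⟩ := hcomp.exists_bound_of_continuousOn hF
  obtain ⟨K', hK'⟩ := hcomp.exists_bound_of_continuousOn hF'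
  have hsl : ∀ G : ℝ → ℝ → ℝ, ContinuousOn (fun p : ℝ × ℝ => G p.1 p.2) (Icc a b ×ˢ Icc 0 T) →
      ∀ t ∈ Icc (0:ℝ) T, ContinuousOn (fun x => G x t) (Icc a b) := by
    intro G hG t ht
    exact hG.comp (f := fun x : ℝ => (x, t)) (by fun_prop) (fun x hx => ⟨hx, ht⟩)
  have hint : ∀ G : ℝ → ℝ → ℝ, ContinuousOn (fun p : ℝ × ℝ => G p.1 p.2) (Icc a b ×ˢ Icc 0 T) →
      ∀ t ∈ Icc (0:ℝ) T, IntervalIntegrable (fun x => G x t) MeasureTheory.volume a b := by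
    intro G hG t ht
    exact (hsl G hG t ht).intervalIntegrable_of_Icc hab
  have hsub : ∀ x, x ∈ Set.uIoc a b → x ∈ Icc a b := by
    intro x hx
    rw [uIoc_of_le hab] at hx
    exact Ioc_subset_Icc_self hx
  constructor
  · intro t ht
    refine intervalIntegral.continuousWithinAt_of_dominated_interval (bound := fun _ => K) ?_ ?_ ?_ ?_
    · filter_upwards [self_mem_nhdsWithin] with s hs
      exact (hint F hF s hs).def'.aestronglyMeasurable
    · filter_upwards [self_mem_nhdsWithin] with s hs
      exact Eventually.of_forall fun x hx => hK (x, s) ⟨hsub x hx, hs⟩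
    · simp
    · exact Eventually.of_forall fun x hx =>
        ((hd x (hsub x hx) t ht).continuousAt).continuousWithinAt
  · intro t ht
    have htI := Ioo_subset_Icc_self ht
    refine (intervalIntegral.hasDerivAt_integral_of_dominated_loc_of_deriv_le
      (F := fun s x => F x s) (F' := fun s x => F' x s) (s := Ioo 0 T) (bound := fun _ => K') (Ioo_mem_nhds ht.1 ht.2) ?_ (hint F hF t htI)
      (hint F' hF' t htI).def'.aestronglyMeasurable ?_ (by simp) ?_).2
    · filter_upwards [Ioo_mem_nhds ht.1 ht.2] with s hs
      exact (hint F hF s (Ioo_subset_Icc_self hs)).def'.aestronglyMeasurable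
    · exact Eventually.of_forall fun x hx s hs =>
        hK' (x, s) ⟨hsub x hx, Ioo_subset_Icc_self hs⟩
    · exact Eventually.of_forall fun x hx s hs => hd x (hsub x hx) s (Ioo_subset_Icc_self hs)

lemma gronwall_zero {T K : ℝ} (E E' : ℝ → ℝ) (hc : ContinuousOn E (Icc 0 T))
    (hd : ∀ t ∈ Ioo (0:ℝ) T, HasDerivAt E (E' t) t) (hle : ∀ t ∈ Ioo (0:ℝ) T, E' t ≤ K * E t)
    (h0 : E 0 = 0) : ∀ t ∈ Icc (0:ℝ) T, E t ≤ 0 := by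
  intro t ht
  have hder : ∀ s ∈ Ioo (0:ℝ) T, HasDerivAt (fun s => Real.exp (-K * s) * E s)
      (Real.exp (-K * s) * (E' s - K * E s)) s := by
    intro s hs
    have h1 : HasDerivAt (fun s : ℝ => Real.exp (-K * s)) (Real.exp (-K * s) * (-K * 1)) s :=
      ((hasDerivAt_id s).const_mul (-K)).exp
    refine (h1.mul (hd s hs)).congr_deriv ?_
    ring
  have hanti : AntitoneOn (fun s => Real.exp (-K * s) * E s) (Icc 0 T) := by
    apply antitoneOn_of_deriv_nonpos (convex_Icc 0 T)
    · exact ContinuousOn.mul (by fun_prop) hc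
    · intro s hs
      rw [interior_Icc] at hs
      exact (hder s hs).differentiableAt.differentiableWithinAt
    · intro s hs
      rw [interior_Icc] at hs
      rw [(hder s hs).deriv]
      exact mul_nonpos_of_nonneg_of_nonpos (Real.exp_pos _).le (by linarith [hle s hs])
  have h1 := hanti ⟨le_rfl, ht.1.trans ht.2⟩ ht ht.1
  simp only [h0, mul_zero] at h1
  by_contra hcon
  push Not at hcon
  have := mul_pos (Real.exp_pos (-K * t)) hcon
  linarith

/-- uniqueness for smooth, L-periodic-in-x, bounded-away-from-zero
solutions of `u_t = u u_xxx` on `ℝ × [0,T]`. -/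
theorem stmt1
    (C L T : ℝ) (hC : 1 < C) (hL : 0 < L) (hT : 0 < T)
    (u v : ℝ → ℝ → ℝ)
    (hu : ContDiff ℝ (⊤ : ℕ∞) (fun p : ℝ × ℝ => u p.1 p.2))
    (hv : ContDiff ℝ (⊤ : ℕ∞) (fun p : ℝ × ℝ => v p.1 p.2))
    (huper : ∀ x : ℝ, ∀ t ∈ Icc (0:ℝ) T, u (x + L) t = u x t)
    (hvper : ∀ x : ℝ, ∀ t ∈ Icc (0:ℝ) T, v (x + L) t = v x t)
    (hub : ∀ x : ℝ, ∀ t ∈ Icc (0:ℝ) T, 1 / C ≤ u x t ∧ u x t ≤ C)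
    (hvb : ∀ x : ℝ, ∀ t ∈ Icc (0:ℝ) T, 1 / C ≤ v x t ∧ v x t ≤ C)
    (hupde : ∀ x : ℝ, ∀ t ∈ Icc (0:ℝ) T,
      deriv (fun s => u x s) t = u x t * iteratedDeriv 3 (fun y => u y t) x)
    (hvpde : ∀ x : ℝ, ∀ t ∈ Icc (0:ℝ) T,
      deriv (fun s => v x s) t = v x t * iteratedDeriv 3 (fun y => v y t) x)
    (hinit : ∀ x : ℝ, u x 0 = v x 0) :
    ∀ x : ℝ, ∀ t ∈ Icc (0:ℝ) T, u x t = v x t := by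
  obtain ⟨u1, hu1, du1⟩ := dx_one u hu
  obtain ⟨u2, hu2, du2⟩ := dx_one u1 hu1
  obtain ⟨u3, hu3, du3⟩ := dx_one u2 hu2
  obtain ⟨v1, hv1, dv1⟩ := dx_one v hv
  obtain ⟨v2, hv2, dv2⟩ := dx_one v1 hv1
  obtain ⟨v3, hv3, dv3⟩ := dx_one v2 hv2
  have iu : ∀ x t, iteratedDeriv 3 (fun y => u y t) x = u3 x t := by
    intro x t
    have e1 : deriv (fun y => u y t) = fun y => u1 y t := funext fun y => (du1 y t).deriv
    have e2 : deriv (fun y => u1 y t) = fun y => u2 y t := funext fun y => (du2 y t).deriv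
    simp only [iteratedDeriv_succ, iteratedDeriv_zero, e1, e2, (du3 x t).deriv]
  have iv : ∀ x t, iteratedDeriv 3 (fun y => v y t) x = v3 x t := by
    intro x t
    have e1 : deriv (fun y => v y t) = fun y => v1 y t := funext fun y => (dv1 y t).deriv
    have e2 : deriv (fun y => v1 y t) = fun y => v2 y t := funext fun y => (dv2 y t).deriv
    simp only [iteratedDeriv_succ, iteratedDeriv_zero, e1, e2, (dv3 x t).deriv]
  have dut : ∀ x, ∀ t ∈ Icc (0:ℝ) T, HasDerivAt (fun s => u x s) (u x t * u3 x t) t := by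
    intro x t ht
    rw [← iu, ← hupde x t ht]
    have : Differentiable ℝ (fun s => u x s) :=
      (hu.differentiable (by simp)).comp (f := fun s : ℝ => (x, s)) (by fun_prop)
    exact (this t).hasDerivAt
  have dvt : ∀ x, ∀ t ∈ Icc (0:ℝ) T, HasDerivAt (fun s => v x s) (v x t * v3 x t) t := by
    intro x t ht
    rw [← iv, ← hvpde x t ht]
    have : Differentiable ℝ (fun s => v x s) :=
      (hv.differentiable (by simp)).comp (f := fun s : ℝ => (x, s)) (by fun_prop)
    exact (this t).hasDerivAt
  have upos : ∀ x, ∀ t ∈ Icc (0:ℝ) T, 0 < u x t := fun x t ht =>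
    lt_of_lt_of_le (by positivity) (hub x t ht).1
  have cu := hu.continuous
  have cv := hv.continuous
  have cu3 := hu3.continuous
  have cv3 := hv3.continuous
  intro a t0 ht0
  have hab : a ≤ a + L := by linarith
  set F : ℝ → ℝ → ℝ := fun x t => (u x t - v x t) ^ 2 / u x t with hFdef
  set R : ℝ → ℝ → ℝ := fun x t => (2 * v3 x t - u3 x t) * F x t with hRdef
  set S : ℝ → ℝ → ℝ := fun x t => 2 * ((u x t - v x t) * (u3 x t - v3 x t)) with hSdef
  have cF : ContinuousOn (fun p : ℝ × ℝ => F p.1 p.2) (Icc a (a + L) ×ˢ Icc 0 T) := by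
    apply ContinuousOn.div (by fun_prop) (by fun_prop)
    intro p hp
    exact (upos _ _ hp.2).ne'
  have cR : ContinuousOn (fun p : ℝ × ℝ => R p.1 p.2) (Icc a (a + L) ×ˢ Icc 0 T) :=
    ContinuousOn.mul (by fun_prop) cF
  have cS : Continuous (fun p : ℝ × ℝ => S p.1 p.2) := by fun_prop
  have hd : ∀ x ∈ Icc a (a + L), ∀ t ∈ Icc (0:ℝ) T,
      HasDerivAt (fun s => F x s) (S x t + R x t) t := by
    intro x _ t ht
    have hp := upos x t ht
    have h1 := (((dut x t ht).sub (dvt x t ht)).pow 2).div (dut x t ht) hp.ne'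
    refine h1.congr_deriv ?_
    simp only [hSdef, hRdef, hFdef, Pi.sub_apply, Pi.pow_apply]
    field_simp
    ring
  obtain ⟨Ec, Ed⟩ := energy_deriv hab F (fun x t => S x t + R x t) cF
    (cS.continuousOn.add cR) hd
  obtain ⟨K, hK⟩ := (isCompact_Icc.prod isCompact_Icc :
    IsCompact (Icc a (a + L) ×ˢ Icc (0:ℝ) T)).exists_bound_of_continuousOn
    (f := fun p : ℝ × ℝ => 2 * v3 p.1 p.2 - u3 p.1 p.2) (by fun_prop)
  have slice : ∀ G : ℝ → ℝ → ℝ,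
      ContinuousOn (fun p : ℝ × ℝ => G p.1 p.2) (Icc a (a + L) ×ˢ Icc 0 T) →
      ∀ t ∈ Icc (0:ℝ) T, ContinuousOn (fun x => G x t) (Icc a (a + L)) := by
    intro G hG t ht
    exact hG.comp (f := fun x : ℝ => (x, t)) (by fun_prop) (fun x hx => ⟨hx, ht⟩)
  have hS0 : ∀ t ∈ Icc (0:ℝ) T, ∫ x in a..(a + L), S x t = 0 := by
    intro t ht
    have hP : ∀ x ∈ uIcc a (a + L), HasDerivAt
        (fun x => 2 * ((u x t - v x t) * (u2 x t - v2 x t)) - (u1 x t - v1 x t) ^ 2)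
        (S x t) x := by
      intro x _
      have h1 := ((((du1 x t).sub (dv1 x t)).mul ((du3 x t).sub (dv3 x t))).const_mul 2).sub
        (((du2 x t).sub (dv2 x t)).pow 2)
      refine h1.congr_deriv ?_
      simp only [hSdef, Pi.sub_apply]
      ring
    rw [intervalIntegral.integral_eq_sub_of_hasDerivAt hP
      ((slice S cS.continuousOn t ht).intervalIntegrable_of_Icc hab)]
    have p1 := per_deriv (fun x => du1 x t) (fun x => huper x t ht)
    have p2 := per_deriv (fun x => du2 x t) p1
    have q1 := per_deriv (fun x => dv1 x t) (fun x => hvper x t ht)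
    have q2 := per_deriv (fun x => dv2 x t) q1
    simp only [p1, p2, q1, q2, huper a t ht, hvper a t ht, sub_self]
  have hE := gronwall_zero (K := K) _ _ Ec Ed (by
    intro t ht
    have ht' := Ioo_subset_Icc_self ht
    have iS := (slice S cS.continuousOn t ht').intervalIntegrable_of_Icc
      (μ := MeasureTheory.volume) hab
    have iR := (slice R cR t ht').intervalIntegrable_of_Icc (μ := MeasureTheory.volume) hab
    have iF := (slice F cF t ht').intervalIntegrable_of_Icc (μ := MeasureTheory.volume) hab
    rw [intervalIntegral.integral_add iS iR, hS0 t ht', zero_add,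
      ← intervalIntegral.integral_const_mul]
    apply intervalIntegral.integral_mono_on hab iR (iF.const_mul K)
    intro x hx
    have h1 := hK (x, t) ⟨hx, ht'⟩
    exact mul_le_mul_of_nonneg_right ((le_abs_self _).trans h1)
      (div_nonneg (sq_nonneg _) (upos x t ht').le)) (by simp [hFdef, hinit]) t0 ht0
  by_contra hne
  have hpos : 0 < ∫ x in a..(a + L), F x t0 := by
    apply intervalIntegral.integral_pos (by linarith) (slice F cF t0 ht0)
    · intro x _
      exact div_nonneg (sq_nonneg _) (upos x t0 ht0).le
    · refine ⟨a, ⟨le_rfl, hab⟩, ?_⟩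
      have := sub_ne_zero.mpr hne
      have := upos a t0 ht0
      simp only [hFdef]
      positivity
  linarith
end

section
/- There exists exactly one function g : ℝ → ℝ with the following properties: g is real analytic, odd (so in particular g(0) = g″(0) = 0), strictly monotone decreasing, positive for z < 0, satisfies g(z) → +1 as z → −∞ and g(z) → −1 as z → +∞, and solves the similarity ODE (g g′)″(z) = 6 z g′(z) + 6 z² g″(z) + z³ g‴(z) for all z ∈ ℝ. -/
open Set Filter Topology
open scoped ContDiff

noncomputable def J (n : ℕ) : C(Icc (0:ℝ) 1, ℝ) →L[ℝ] C(Icc (0:ℝ) 1, ℝ) :=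
  LinearMap.mkContinuous
    { toFun := fun f => ⟨fun t => ∫ r in (0:ℝ)..1, r ^ n * IccExtend zero_le_one f (t * r), by
        apply intervalIntegral.continuous_parametric_intervalIntegral_of_continuous'
        have : Continuous (IccExtend (zero_le_one (α := ℝ)) f) := f.continuous.Icc_extend'
        simp only [Function.uncurry_def]
        fun_prop⟩
      map_add' := by
        intro f g
        ext t
        have hf : Continuous (IccExtend (zero_le_one (α := ℝ)) f) := f.continuous.Icc_extend'
        have hg : Continuous (IccExtend (zero_le_one (α := ℝ)) g) := g.continuous.Icc_extend'
        simp only [ContinuousMap.coe_mk, ContinuousMap.add_apply]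
        rw [← intervalIntegral.integral_add]
        · congr 1; ext r
          simp [IccExtend]; ring
        · exact Continuous.intervalIntegrable (by fun_prop) _ _
        · exact Continuous.intervalIntegrable (by fun_prop) _ _
      map_smul' := by
        intro c f
        ext t
        simp only [ContinuousMap.coe_mk, ContinuousMap.smul_apply, RingHom.id_apply, smul_eq_mul]
        rw [← intervalIntegral.integral_const_mul]
        congr 1; ext r
        simp [IccExtend]; ring } 1 (by
    intro f
    rw [one_mul, ContinuousMap.norm_le _ (norm_nonneg _)]
    intro t
    have := intervalIntegral.norm_integral_le_of_norm_le_const (a := 0) (b := 1) (C := ‖f‖)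
      (f := fun r => r ^ n * IccExtend (zero_le_one (α := ℝ)) f (t * r)) (by
        intro r hr
        rw [uIoc_of_le zero_le_one] at hr
        rw [norm_mul]
        calc _ ≤ 1 * ‖f‖ := by
              apply mul_le_mul _ _ (norm_nonneg _) zero_le_one
              · rw [Real.norm_of_nonneg (by have := hr.1; positivity)]
                exact pow_le_one₀ hr.1.le hr.2
              · exact f.norm_coe_le_norm _
          _ = _ := one_mul _)
    simpa using this)

lemma J_apply (n : ℕ) (f : C(Icc (0:ℝ) 1, ℝ)) (t : Icc (0:ℝ) 1) :
    J n f t = ∫ r in (0:ℝ)..1, r ^ n * IccExtend zero_le_one f (t * r) := rfl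

lemma key {A : Type*} [NormedCommRing A] [NormedAlgebra ℝ A] [CompleteSpace A]
    (N : ℝ × A → A) (hN : ContDiff ℝ ω N) (c : ℝ) (hc : c ≠ 0) (y : ℝ → A)
    (hy : ContinuousAt y 0) (hy0 : y 0 = c • (1 : A))
    (h : ∀ᶠ l in 𝓝 (0:ℝ), y l ^ 2 = (c ^ 2) • (1 : A) + l • N (l, y l)) : AnalyticAt ℝ y 0 := by
  set Φ : ℝ × A → ℝ × A := fun p => (p.1, p.2 ^ 2 - (c ^ 2) • (1 : A) - p.1 • N p) with hΦ
  have hΦc : ContDiff ℝ ω Φ := by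
    simp only [hΦ]
    fun_prop
  set v := N (0, y 0) with hv
  let e : (ℝ × A) ≃L[ℝ] (ℝ × A) := ContinuousLinearEquiv.equivOfInverse
    ((ContinuousLinearMap.fst ℝ ℝ A).prod
      ((2 * c) • ContinuousLinearMap.snd ℝ ℝ A - (ContinuousLinearMap.fst ℝ ℝ A).smulRight v))
    ((ContinuousLinearMap.fst ℝ ℝ A).prod
      ((2 * c)⁻¹ • (ContinuousLinearMap.snd ℝ ℝ A + (ContinuousLinearMap.fst ℝ ℝ A).smulRight v)))
    (by intro p; ext <;> simp; match_scalars <;> field_simp; simp)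
    (by intro p; ext <;> simp; match_scalars <;> field_simp; simp)
  have hd : HasFDerivAt Φ (e : (ℝ × A) →L[ℝ] (ℝ × A)) (0, y 0) := by
    have h1 : HasFDerivAt (fun p : ℝ × A => p.1) (ContinuousLinearMap.fst ℝ ℝ A) (0, y 0) :=
      hasFDerivAt_fst
    have h2 : HasFDerivAt (fun p : ℝ × A => p.2) (ContinuousLinearMap.snd ℝ ℝ A) (0, y 0) :=
      hasFDerivAt_snd
    have h3 := ((hN.differentiable (by simp)) (0, y 0)).hasFDerivAt
    have h4 := h1.prodMk (((h2.mul h2).sub_const ((c ^ 2) • (1 : A))).sub (h1.smul h3))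
    have : Φ = fun p => (p.1, p.2 * p.2 - (c ^ 2) • (1 : A) - p.1 • N p) := by
      ext p <;> simp [hΦ, pow_two]
    rw [this]
    refine h4.congr_fderiv (ContinuousLinearMap.ext fun p => ?_)
    ext <;> simp [e, hy0, hv]
    module
  have hdc : ContDiffAt ℝ ω Φ (0, y 0) := hΦc.contDiffAt
  have hinv := hdc.to_localInverse hd (by simp)
  have hstr := hdc.hasStrictFDerivAt' hd (by simp)
  have hleft := hstr.eventually_left_inverse
  have hΦ0 : Φ (0, y 0) = (0, 0) := by
    simp [hΦ, hy0, pow_two, smul_smul]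
  have hcont : ContinuousAt (fun l : ℝ => (l, y l)) 0 := continuousAt_id.prodMk hy
  have h5 := hcont.eventually hleft
  have h6 : ∀ᶠ l in 𝓝 (0:ℝ), (hdc.localInverse hd (by simp) ((l, 0) : ℝ × A)).2 = y l := by
    filter_upwards [h5, h] with l hl1 hl2
    have : Φ (l, y l) = (l, 0) := by simp [hΦ, hl2]
    rw [this] at hl1
    exact congrArg Prod.snd hl1
  have h7 : AnalyticAt ℝ (fun l : ℝ => (hdc.localInverse hd (by simp) ((l, 0) : ℝ × A)).2) 0 := by
    rw [hΦ0] at hinv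
    have h8 : ContDiffAt ℝ ω (fun l : ℝ => (hdc.localInverse hd (by simp) ((l, 0) : ℝ × A))) 0 :=
      hinv.comp (0:ℝ) (f := fun l : ℝ => ((l, 0) : ℝ × A)) (by fun_prop)
    exact h8.snd.analyticAt
  exact h7.congr h6

noncomputable def th : ℕ → ℝ → ℝ
  | 0 => fun _ => 1
  | n + 1 => fun s => Real.sqrt (1 + 6 * s ^ 2 * ∫ r in (0:ℝ)..1, r ^ 3 * th n (s * r))

lemma th_cont (n : ℕ) : Continuous (th n) := by
  induction n with
  | zero => exact continuous_const
  | succ n ih =>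
    have : Continuous fun s : ℝ => ∫ r in (0:ℝ)..1, r ^ 3 * th n (s * r) := by
      apply intervalIntegral.continuous_parametric_intervalIntegral_of_continuous'
      simp only [Function.uncurry_def]
      fun_prop
    simp only [th]
    fun_prop

lemma th_ii (n : ℕ) (s : ℝ) :
    IntervalIntegrable (fun r => r ^ 3 * th n (s * r)) MeasureTheory.volume 0 1 := by
  have := th_cont n
  exact Continuous.intervalIntegrable (by fun_prop) _ _

lemma th_nonneg (n : ℕ) (s : ℝ) : 0 ≤ th n s := by
  cases n with
  | zero => simp [th]
  | succ n => exact Real.sqrt_nonneg _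

lemma th_int_nonneg (n : ℕ) (s : ℝ) : 0 ≤ ∫ r in (0:ℝ)..1, r ^ 3 * th n (s * r) := by
  apply intervalIntegral.integral_nonneg zero_le_one
  intro r hr
  have := hr.1
  have := th_nonneg n (s * r)
  positivity

lemma th_one_le (n : ℕ) (s : ℝ) : 1 ≤ th n s := by
  cases n with
  | zero => simp [th]
  | succ n =>
    simp only [th]
    rw [Real.one_le_sqrt]
    have := th_int_nonneg n s
    have : 0 ≤ 6 * s ^ 2 * ∫ r in (0:ℝ)..1, r ^ 3 * th n (s * r) := by positivity
    linarith

lemma th_le (n : ℕ) (s : ℝ) : th n s ≤ 1 + s ^ 2 := by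
  induction n generalizing s with
  | zero => simp [th]; positivity
  | succ n ih =>
    have h1 : ∫ r in (0:ℝ)..1, r ^ 3 * th n (s * r) ≤ ∫ r in (0:ℝ)..1, (r ^ 3 + s ^ 2 * r ^ 5) := by
      apply intervalIntegral.integral_mono_on zero_le_one (th_ii n s)
      · exact Continuous.intervalIntegrable (by fun_prop) _ _
      · intro r hr
        have := mul_le_mul_of_nonneg_left (ih (s * r)) (pow_nonneg hr.1 3)
        nlinarith
    have h2 : ∫ r in (0:ℝ)..1, (r ^ 3 + s ^ 2 * r ^ 5) = 1 / 4 + s ^ 2 / 6 := by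
      rw [intervalIntegral.integral_add, intervalIntegral.integral_const_mul]
      · simp [integral_pow]; ring
      · exact Continuous.intervalIntegrable (by fun_prop) _ _
      · exact Continuous.intervalIntegrable (by fun_prop) _ _
    simp only [th]
    apply Real.sqrt_le_iff.2 ⟨by positivity, ?_⟩
    rw [h2] at h1
    nlinarith [mul_le_mul_of_nonneg_left h1 (by positivity : 0 ≤ 6 * s ^ 2)]

lemma th_mono_succ (n : ℕ) (s : ℝ) : th n s ≤ th (n + 1) s := by
  induction n generalizing s with
  | zero => exact th_one_le 1 s
  | succ n ih =>
    rw [th, th]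
    apply Real.sqrt_le_sqrt
    have : ∫ r in (0:ℝ)..1, r ^ 3 * th n (s * r) ≤ ∫ r in (0:ℝ)..1, r ^ 3 * th (n+1) (s * r) := by
      apply intervalIntegral.integral_mono_on zero_le_one (th_ii n s) (th_ii (n+1) s)
      intro r hr
      exact mul_le_mul_of_nonneg_left (ih (s * r)) (pow_nonneg hr.1 3)
    nlinarith [mul_le_mul_of_nonneg_left this (by positivity : 0 ≤ 6 * s ^ 2)]

noncomputable def theta (s : ℝ) : ℝ := ⨆ n, th n s

lemma theta_tendsto (s : ℝ) : Tendsto (fun n => th n s) atTop (𝓝 (theta s)) := by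
  apply tendsto_atTop_ciSup
  · exact monotone_nat_of_le_succ fun n => th_mono_succ n s
  · exact ⟨1 + s ^ 2, by rintro _ ⟨n, rfl⟩; exact th_le n s⟩

lemma theta_one_le (s : ℝ) : 1 ≤ theta s :=
  ge_of_tendsto' (theta_tendsto s) fun n => th_one_le n s

lemma theta_le (s : ℝ) : theta s ≤ 1 + s ^ 2 :=
  le_of_tendsto' (theta_tendsto s) fun n => th_le n s

lemma theta_meas : Measurable theta :=
  measurable_of_tendsto_metrizable (fun n => (th_cont n).measurable)
    (tendsto_pi_nhds.2 theta_tendsto)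

lemma theta_eq (s : ℝ) :
    theta s ^ 2 = 1 + 6 * s ^ 2 * ∫ r in (0:ℝ)..1, r ^ 3 * theta (s * r) := by
  have h1 : Tendsto (fun n => ∫ r in (0:ℝ)..1, r ^ 3 * th n (s * r)) atTop
      (𝓝 (∫ r in (0:ℝ)..1, r ^ 3 * theta (s * r))) := by
    apply intervalIntegral.tendsto_integral_filter_of_dominated_convergence
      (fun r => |r ^ 3 * (1 + (s * r) ^ 2)|)
    · refine Eventually.of_forall fun n => ?_
      have := th_cont n
      exact Continuous.aestronglyMeasurable (by fun_prop)
    · refine Eventually.of_forall fun n => Eventually.of_forall fun r _ => ?_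
      rw [norm_mul, abs_mul]
      apply mul_le_mul_of_nonneg_left _ (norm_nonneg _)
      rw [Real.norm_of_nonneg (th_nonneg _ _)]
      exact (th_le _ _).trans (le_abs_self _)
    · exact Continuous.intervalIntegrable (by fun_prop) _ _
    · exact Eventually.of_forall fun r _ => (theta_tendsto _).const_mul _
  have h2 : Tendsto (fun n => th (n + 1) s ^ 2) atTop (𝓝 (theta s ^ 2)) :=
    ((tendsto_add_atTop_iff_nat 1).2 (theta_tendsto s)).pow 2
  have h3 : ∀ n, th (n + 1) s ^ 2 = 1 + 6 * s ^ 2 * ∫ r in (0:ℝ)..1, r ^ 3 * th n (s * r) := by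
    intro n
    rw [th, Real.sq_sqrt]
    have := th_int_nonneg n s
    positivity
  simp_rw [h3] at h2
  exact tendsto_nhds_unique h2 ((h1.const_mul _).const_add _)

lemma theta_even (s : ℝ) : theta (-s) = theta s := by
  have : ∀ n s, th n (-s) = th n s := by
    intro n
    induction n with
    | zero => intro s; rfl
    | succ n ih =>
      intro s
      simp [th, ih]
  simp [theta, this]

lemma theta_ii (a b : ℝ) :
    IntervalIntegrable (fun x => x ^ 3 * theta x) MeasureTheory.volume a b := by
  have h : IntervalIntegrable (fun x : ℝ => |x| ^ 3 * (1 + x ^ 2)) MeasureTheory.volume a b :=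
    Continuous.intervalIntegrable (by fun_prop) _ _
  apply h.mono_fun
  · exact (Measurable.mul (by fun_prop) theta_meas).aestronglyMeasurable
  · refine Eventually.of_forall fun x => ?_
    have h1 := theta_one_le x
    have h2 := theta_le x
    simp only [norm_mul, Real.norm_eq_abs, abs_pow, abs_abs]
    apply mul_le_mul_of_nonneg_left _ (by positivity)
    rw [abs_of_nonneg (by linarith), abs_of_nonneg (by positivity)]
    exact h2

lemma W_eq (s : ℝ) : (s * theta s) ^ 2 = s ^ 2 + 6 * ∫ x in (0:ℝ)..s, x ^ 3 * theta x := by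
  have h := intervalIntegral.mul_integral_comp_mul_left (a := 0) (b := 1)
    (f := fun x => x ^ 3 * theta x) s
  simp only [mul_zero, mul_one] at h
  rw [← h, mul_pow, theta_eq]
  have : ∫ x in (0:ℝ)..1, (s * x) ^ 3 * theta (s * x)
      = s ^ 3 * ∫ x in (0:ℝ)..1, x ^ 3 * theta (s * x) := by
    rw [← intervalIntegral.integral_const_mul]
    congr 1; ext x; ring
  rw [this]; ring

lemma theta_cont : Continuous theta := by
  rw [continuous_iff_continuousAt]
  intro s
  by_cases hs : s = 0
  · subst hs
    have h0 : theta 0 = 1 := le_antisymm (by simpa using theta_le 0) (theta_one_le 0)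
    rw [ContinuousAt, h0]
    apply tendsto_of_tendsto_of_tendsto_of_le_of_le tendsto_const_nhds _ theta_one_le theta_le
    have : Continuous fun s : ℝ => 1 + s ^ 2 := by fun_prop
    simpa using this.tendsto 0
  · have hc := intervalIntegral.continuous_primitive theta_ii 0
    have h1 : ContinuousAt (fun s => Real.sqrt ((s ^ 2 + 6 * ∫ x in (0:ℝ)..s, x ^ 3 * theta x) / s ^ 2)) s := by
      apply ContinuousAt.sqrt
      apply ContinuousAt.div
      · exact Continuous.continuousAt (by fun_prop)
      · fun_prop
      · positivity
    apply h1.congr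
    filter_upwards [isOpen_ne.mem_nhds hs] with x hx
    rw [← W_eq, mul_pow, mul_div_cancel_left₀ _ (by have : x ≠ 0 := hx; positivity), Real.sqrt_sq]
    linarith [theta_one_le x]

noncomputable def famY (f : ℝ → ℝ) (hf : Continuous f) (s : ℝ) : C(ℝ, C(Icc (0:ℝ) 1, ℝ)) :=
  ContinuousMap.curry ⟨fun p : ℝ × Icc (0:ℝ) 1 => f (s + p.1 * p.2), by fun_prop⟩

lemma famY_apply (f : ℝ → ℝ) (hf : Continuous f) (s l : ℝ) (t : Icc (0:ℝ) 1) :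
    famY f hf s l t = f (s + l * t) := rfl

noncomputable def uu : C(Icc (0:ℝ) 1, ℝ) := ⟨fun t => t, by fun_prop⟩

lemma uu_apply (t : Icc (0:ℝ) 1) : uu t = t := rfl

lemma analytic_of_family (f : ℝ → ℝ) (hf : Continuous f) (s : ℝ)
    (h : AnalyticAt ℝ (famY f hf s) 0) : AnalyticAt ℝ f s := by
  have h1 : AnalyticAt ℝ (fun l : ℝ => f (s + l)) 0 := by
    have := ((ContinuousMap.evalCLM ℝ (⟨1, by simp⟩ : Icc (0:ℝ) 1) :
      C(Icc (0:ℝ) 1, ℝ) →L[ℝ] ℝ).analyticAt _).comp h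
    refine this.congr (Eventually.of_forall fun l => ?_)
    simp [famY_apply]
  have h2 : AnalyticAt ℝ (fun x : ℝ => x - s) s := by fun_prop
  have h3 := AnalyticAt.comp_of_eq h1 h2 (by simp)
  refine h3.congr (Eventually.of_forall fun l => ?_)
  simp

lemma theta_analytic_zero : AnalyticAt ℝ theta 0 := by
  apply analytic_of_family theta theta_cont
  refine key (fun p => (6 * p.1) • (uu ^ 2 * J 3 p.2)) (by fun_prop) 1 one_ne_zero _
    (famY theta theta_cont 0).continuous.continuousAt ?_ (Eventually.of_forall fun l => ?_)
  · have h0 : theta 0 = 1 := le_antisymm (by simpa using theta_le 0) (theta_one_le 0)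
    ext t; simp [famY_apply, h0]
  · ext t
    simp only [ContinuousMap.pow_apply, famY_apply, ContinuousMap.add_apply,
      ContinuousMap.smul_apply, ContinuousMap.mul_apply, J_apply, uu_apply, ContinuousMap.one_apply,
      smul_eq_mul, zero_add]
    rw [theta_eq]
    have : ∫ r in (0:ℝ)..1, r ^ 3 * IccExtend zero_le_one (famY theta theta_cont 0 l) (t * r)
       = ∫ r in (0:ℝ)..1, r ^ 3 * theta (l * t * r) := by
      apply intervalIntegral.integral_congr
      intro r hr
      rw [uIcc_of_le zero_le_one] at hr
      have hm : (t:ℝ) * r ∈ Icc (0:ℝ) 1 :=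
        ⟨mul_nonneg t.2.1 hr.1, mul_le_one₀ t.2.2 hr.1 hr.2⟩
      simp only
      rw [IccExtend_of_mem _ _ hm, famY_apply]
      simp [mul_assoc]
    rw [this]; ring

lemma psi_cont : Continuous fun s => s * theta s := continuous_id.mul theta_cont

lemma psi_analytic (s : ℝ) : AnalyticAt ℝ (fun s => s * theta s) s := by
  by_cases hs : s = 0
  · subst hs
    exact analyticAt_id.mul theta_analytic_zero
  apply analytic_of_family _ psi_cont
  have hp : s * theta s ≠ 0 := mul_ne_zero hs (by linarith [theta_one_le s])
  refine key (fun p => (2 * s) • uu + p.1 • uu ^ 2 + (6:ℝ) • (uu * J 0 ((s • 1 + p.1 • uu) ^ 2 * p.2)))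
    (by fun_prop) _ hp _
    (famY _ psi_cont s).continuous.continuousAt ?_ (Eventually.of_forall fun l => ?_)
  · ext t; simp [famY_apply]
  · ext t
    simp only [ContinuousMap.pow_apply, famY_apply, ContinuousMap.add_apply,
      ContinuousMap.smul_apply, ContinuousMap.mul_apply, J_apply, uu_apply, ContinuousMap.one_apply,
      smul_eq_mul, mul_one]
    rw [W_eq, W_eq]
    have h1 : ∫ r in (0:ℝ)..1, r ^ 0 * IccExtend zero_le_one
        (((s • 1 + l • uu) ^ 2 * famY (fun s => s * theta s) psi_cont s l : C(Icc (0:ℝ) 1, ℝ))) (t * r)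
       = ∫ r in (0:ℝ)..1, (fun x => x ^ 3 * theta x) ((l * t) * r + s) := by
      apply intervalIntegral.integral_congr
      intro r hr
      rw [uIcc_of_le zero_le_one] at hr
      have hm : (t:ℝ) * r ∈ Icc (0:ℝ) 1 :=
        ⟨mul_nonneg t.2.1 hr.1, mul_le_one₀ t.2.2 hr.1 hr.2⟩
      simp only
      rw [IccExtend_of_mem _ _ hm]
      simp only [ContinuousMap.pow_apply, famY_apply, ContinuousMap.add_apply,
        ContinuousMap.smul_apply, ContinuousMap.mul_apply, uu_apply, ContinuousMap.one_apply,
        smul_eq_mul, mul_one]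
      rw [show s + l * (t * r) = l * t * r + s by ring]
      ring
    have h2 := intervalIntegral.smul_integral_comp_mul_add (a := 0) (b := 1)
      (fun x => x ^ 3 * theta x) (l * t) s
    have h3 := intervalIntegral.integral_add_adjacent_intervals (theta_ii 0 s) (theta_ii s (s + l * t))
    rw [smul_eq_mul, mul_zero, mul_one, zero_add, add_comm (l * (t:ℝ)) s] at h2
    rw [h1, ← h3, ← h2]
    ring

/-- The normalized profile. -/
noncomputable def HH (s : ℝ) : ℝ := s * theta s - s ^ 3

lemma HH_analytic (s : ℝ) : AnalyticAt ℝ HH s := (psi_analytic s).sub (by fun_prop)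

lemma HH_diff : Differentiable ℝ HH := fun s => (HH_analytic s).differentiableAt

lemma HH_zero : HH 0 = 0 := by simp [HH]

lemma HH_odd (s : ℝ) : HH (-s) = - HH s := by simp only [HH, theta_even]; ring

lemma HH_ode (s : ℝ) : (HH s + s ^ 3) * deriv HH s = s := by
  by_cases hs : s = 0
  · subst hs; simp [HH_zero]
  have h1 : HasDerivAt (fun s => (HH s + s ^ 3) ^ 2)
      (2 * (HH s + s ^ 3) * (deriv HH s + 3 * s ^ 2)) s := by
    have := ((HH_diff s).hasDerivAt.add (hasDerivAt_pow 3 s)).pow 2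
    refine HasDerivAt.congr_deriv this ?_
    simp
  have h2 : HasDerivAt (fun s => s ^ 2 + 6 * ∫ x in (0:ℝ)..s, x ^ 3 * theta x)
      (2 * s + 6 * (s ^ 3 * theta s)) s := by
    have hc : Continuous fun x => x ^ 3 * theta x := by have := theta_cont; fun_prop
    have := (hasDerivAt_pow 2 s).add ((hc.integral_hasStrictDerivAt 0 s).hasDerivAt.const_mul 6)
    refine HasDerivAt.congr_deriv this ?_
    simp
  have h3 : (fun s => (HH s + s ^ 3) ^ 2) = fun s => s ^ 2 + 6 * ∫ x in (0:ℝ)..s, x ^ 3 * theta x := by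
    ext x; rw [← W_eq]; simp [HH]
  rw [h3] at h1
  have h4 := h1.unique h2
  have h5 : s ^ 3 * theta s = (HH s + s ^ 3) * s ^ 2 := by simp only [HH]; ring
  rw [h5] at h4
  linarith

lemma HH_deriv_pos (s : ℝ) (hs : s ≠ 0) : 0 < deriv HH s := by
  have h := HH_ode s
  have h1 : HH s + s ^ 3 = s * theta s := by simp [HH]
  rw [h1, mul_assoc] at h
  have h2 : theta s * deriv HH s = 1 := mul_left_cancel₀ hs (by linarith)
  have := theta_one_le s
  by_contra hn
  nlinarith

lemma HH_strictMono : StrictMono HH := by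
  apply strictMono_of_odd_strictMonoOn_nonneg HH_odd
  apply strictMonoOn_of_deriv_pos (convex_Ici 0) HH_diff.continuous.continuousOn
  intro x hx
  rw [interior_Ici] at hx
  exact HH_deriv_pos x (ne_of_gt hx)

lemma HH_pos (s : ℝ) (hs : 0 < s) : 0 < HH s := by
  have := HH_strictMono hs; rwa [HH_zero] at this

lemma HH_bdd (s : ℝ) : HH s ≤ HH 1 + 1 := by
  rcases le_total s 1 with h | h
  · linarith [HH_strictMono.monotone h]
  have ha : AntitoneOn (fun s => HH s + s⁻¹) (Ici 1) := by
    have hd : ∀ x : ℝ, 0 < x → HasDerivAt (fun s => HH s + s⁻¹) (deriv HH x + -(x ^ 2)⁻¹) x :=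
      fun x hx => (HH_diff x).hasDerivAt.add (hasDerivAt_inv hx.ne')
    apply antitoneOn_of_deriv_nonpos (convex_Ici 1)
    · intro x hx
      exact (hd x (lt_of_lt_of_le one_pos hx)).continuousAt.continuousWithinAt
    · intro x hx
      rw [interior_Ici] at hx
      exact (hd x (lt_trans one_pos hx)).differentiableAt.differentiableWithinAt
    · intro x hx
      rw [interior_Ici] at hx
      have hx0 : 0 < x := lt_trans one_pos hx
      rw [(hd x hx0).deriv]
      have h1 := HH_ode x
      have h2 := HH_pos x hx0
      have h3 := HH_deriv_pos x hx0.ne'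
      have h4 : deriv HH x ≤ (x ^ 2)⁻¹ := by
        rw [← one_div, le_div_iff₀ (by positivity)]
        have : x * (deriv HH x * x ^ 2) ≤ x * 1 := by nlinarith
        exact le_of_mul_le_mul_left this hx0
      linarith
  have := ha (mem_Ici.2 le_rfl) (mem_Ici.2 h) h
  simp only [inv_one] at this
  have : 0 ≤ s⁻¹ := by positivity
  linarith

lemma HH_lim : ∃ L : ℝ, 0 < L ∧ Tendsto HH atTop (𝓝 L) := by
  have hb : BddAbove (range HH) := ⟨HH 1 + 1, by rintro _ ⟨s, rfl⟩; exact HH_bdd s⟩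
  refine ⟨⨆ s, HH s, ?_, tendsto_atTop_ciSup HH_strictMono.monotone hb⟩
  exact lt_of_lt_of_le (HH_pos 1 one_pos) (le_ciSup hb 1)

lemma ode_unique (H₁ H₂ : ℝ → ℝ) (d₁ : Differentiable ℝ H₁) (d₂ : Differentiable ℝ H₂)
    (z₁ : H₁ 0 = 0) (z₂ : H₂ 0 = 0) (p₁ : ∀ s, 0 < s → 0 < H₁ s) (p₂ : ∀ s, 0 < s → 0 < H₂ s)
    (e₁ : ∀ s, 0 < s → (H₁ s + s ^ 3) * deriv H₁ s = s)
    (e₂ : ∀ s, 0 < s → (H₂ s + s ^ 3) * deriv H₂ s = s) (s : ℝ) (hs : 0 ≤ s) : H₁ s = H₂ s := by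
  have ha : AntitoneOn (fun s => (H₁ s - H₂ s) ^ 2) (Ici 0) := by
    apply antitoneOn_of_deriv_nonpos (convex_Ici 0)
    · have := d₁.continuous
      have := d₂.continuous
      exact Continuous.continuousOn (by fun_prop)
    · exact Differentiable.differentiableOn (by fun_prop)
    · intro x hx
      rw [interior_Ici] at hx
      have hx0 : 0 < x := hx
      have hd : HasDerivAt (fun s => (H₁ s - H₂ s) ^ 2)
          (2 * (H₁ x - H₂ x) * (deriv H₁ x - deriv H₂ x)) x := by
        have := ((d₁ x).hasDerivAt.sub (d₂ x).hasDerivAt).pow 2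
        refine HasDerivAt.congr_deriv this ?_
        simp
      rw [hd.deriv]
      have q₁ : 0 < H₁ x + x ^ 3 := by have := p₁ x hx0; positivity
      have q₂ : 0 < H₂ x + x ^ 3 := by have := p₂ x hx0; positivity
      have f₁ : deriv H₁ x = x / (H₁ x + x ^ 3) := by
        rw [eq_div_iff q₁.ne']; linarith [e₁ x hx0]
      have f₂ : deriv H₂ x = x / (H₂ x + x ^ 3) := by
        rw [eq_div_iff q₂.ne']; linarith [e₂ x hx0]
      have : 2 * (H₁ x - H₂ x) * (deriv H₁ x - deriv H₂ x)
          = - (2 * x * (H₁ x - H₂ x) ^ 2 / ((H₁ x + x ^ 3) * (H₂ x + x ^ 3))) := by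
        rw [f₁, f₂]; field_simp; ring
      rw [this]
      have : 0 ≤ 2 * x * (H₁ x - H₂ x) ^ 2 / ((H₁ x + x ^ 3) * (H₂ x + x ^ 3)) := by positivity
      linarith
  have h := ha (mem_Ici.2 le_rfl) (mem_Ici.2 hs) hs
  simp only [z₁, z₂, sub_self] at h
  have : (H₁ s - H₂ s) ^ 2 = 0 := le_antisymm (by simpa using h) (sq_nonneg _)
  have := pow_eq_zero_iff (two_ne_zero) |>.1 this
  linarith

lemma ode_iff (g : ℝ → ℝ) (hg : ∀ z, AnalyticAt ℝ g z) (z : ℝ) :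
    iteratedDeriv 2 (fun w => g w * deriv g w - w ^ 3 * deriv g w) z =
    iteratedDeriv 2 (fun w => g w * deriv g w) z - (6 * z * deriv g z + 6 * z ^ 2 * iteratedDeriv 2 g z
            + z ^ 3 * iteratedDeriv 3 g z) := by
  have hd : ∀ z, AnalyticAt ℝ (deriv g) z := fun z => (hg z).deriv
  have hdd : ∀ z, AnalyticAt ℝ (deriv (deriv g)) z := fun z => (hd z).deriv
  have e0 : deriv (fun w => w ^ 3 * deriv g w)
      = fun w => 3 * w ^ 2 * deriv g w + w ^ 3 * deriv (deriv g) w := by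
    ext w
    have := ((hasDerivAt_pow 3 w).mul (hd w).differentiableAt.hasDerivAt).deriv
    refine Eq.trans this ?_
    simp
  have e1 : iteratedDeriv 2 (fun w => w ^ 3 * deriv g w) z
      = 6 * z * deriv g z + 6 * z ^ 2 * iteratedDeriv 2 g z + z ^ 3 * iteratedDeriv 3 g z := by
    simp only [iteratedDeriv_succ, iteratedDeriv_zero]
    rw [e0]
    have := ((((hasDerivAt_pow 2 z).const_mul 3).mul (hd z).differentiableAt.hasDerivAt).add
      ((hasDerivAt_pow 3 z).mul (hdd z).differentiableAt.hasDerivAt)).deriv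
    refine Eq.trans this ?_
    simp
    ring
  rw [← e1]
  have c1 : ContDiffAt ℝ 2 (fun w => g w * deriv g w) z := ((hg z).mul (hd z)).contDiffAt
  have c2 : ContDiffAt ℝ 2 (fun w => w ^ 3 * deriv g w) z :=
    (AnalyticAt.mul (by fun_prop) (hd z)).contDiffAt
  exact iteratedDeriv_sub c1 c2

def Good (g : ℝ → ℝ) : Prop :=
      (∀ z : ℝ, AnalyticAt ℝ g z) ∧
      (∀ z : ℝ, g (-z) = -g z) ∧
      StrictAnti g ∧
      (∀ z < (0:ℝ), 0 < g z) ∧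
      Tendsto g atBot (nhds 1) ∧
      Tendsto g atTop (nhds (-1)) ∧
      (∀ z : ℝ,
        iteratedDeriv 2 (fun w => g w * deriv g w) z =
          6 * z * deriv g z + 6 * z ^ 2 * iteratedDeriv 2 g z
            + z ^ 3 * iteratedDeriv 3 g z)

lemma good_exists (L μ : ℝ) (hμ : 0 < μ) (hμL : μ ^ 3 = L) (hL : Tendsto HH atTop (𝓝 L)) :
    Good (fun z => - (HH (μ * z) / μ ^ 3)) := by
  have hL0 : 0 < L := by rw [← hμL]; positivity
  have han : ∀ z, AnalyticAt ℝ (fun z => - (HH (μ * z) / μ ^ 3)) z := by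
    intro z
    have h1 : AnalyticAt ℝ (fun z : ℝ => μ * z) z := by fun_prop
    have h2 : AnalyticAt ℝ (fun z : ℝ => HH (μ * z)) z :=
      AnalyticAt.fun_comp (HH_analytic (μ * z)) h1
    exact (h2.div_const).neg
  have hodd : ∀ z, (fun z => - (HH (μ * z) / μ ^ 3)) (-z) = - (fun z => - (HH (μ * z) / μ ^ 3)) z := by
    intro z
    simp only [mul_neg, HH_odd]; ring
  have htop : Tendsto (fun z => - (HH (μ * z) / μ ^ 3)) atTop (𝓝 (-1)) := by
    have h1 : Tendsto (fun z => HH (μ * z)) atTop (𝓝 L) :=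
      hL.comp (tendsto_id.const_mul_atTop hμ)
    have := (h1.div_const (μ ^ 3)).neg
    rwa [show L / μ ^ 3 = 1 by rw [hμL, div_self hL0.ne']] at this
  have hd : ∀ z, deriv (fun z => - (HH (μ * z) / μ ^ 3)) z = - (deriv HH (μ * z) / μ ^ 2) := by
    intro z
    have h1 : HasDerivAt (fun z => HH (μ * z)) (deriv HH (μ * z) * (μ * 1)) z :=
      (HH_diff (μ * z)).hasDerivAt.comp z ((hasDerivAt_id z).const_mul μ)
    refine Eq.trans ((h1.div_const (μ ^ 3)).neg).deriv ?_
    field_simp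
  refine ⟨han, hodd, ?_, ?_, ?_, htop, ?_⟩
  · intro a b hab
    have := HH_strictMono (mul_lt_mul_of_pos_left hab hμ)
    simp only
    have := div_lt_div_of_pos_right this (by positivity : 0 < μ ^ 3)
    linarith
  · intro z hz
    have h1 := HH_strictMono (by nlinarith : μ * z < 0)
    rw [HH_zero] at h1
    have := div_neg_of_neg_of_pos h1 (by positivity : 0 < μ ^ 3)
    linarith
  · have h1 := (htop.comp tendsto_neg_atBot_atTop).neg
    rw [neg_neg] at h1
    refine h1.congr fun z => ?_
    have := hodd z
    simp only [Function.comp] at this ⊢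
    linarith
  · intro z
    have h1 := ode_iff _ han z
    have h2 : (fun w => (fun z => - (HH (μ * z) / μ ^ 3)) w * deriv (fun z => - (HH (μ * z) / μ ^ 3)) w
        - w ^ 3 * deriv (fun z => - (HH (μ * z) / μ ^ 3)) w) = fun w => (1 / μ ^ 4) * w := by
      ext w
      rw [hd]
      have h3 := HH_ode (μ * w)
      have h4 : (- (HH (μ * w) / μ ^ 3)) * (- (deriv HH (μ * w) / μ ^ 2))
        - w ^ 3 * (- (deriv HH (μ * w) / μ ^ 2))
        = ((HH (μ * w) + (μ * w) ^ 3) * deriv HH (μ * w)) / μ ^ 5 := by field_simp; ring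
      simp only
      rw [h4, h3]; field_simp
    rw [h2] at h1
    have h5 : iteratedDeriv 2 (fun w : ℝ => (1 / μ ^ 4) * w) z = 0 := by
      simp only [iteratedDeriv_succ, iteratedDeriv_zero]
      have : deriv (fun w : ℝ => (1 / μ ^ 4) * w) = fun _ => 1 / μ ^ 4 := by
        ext w; simp
      rw [this]; simp
    rw [h5] at h1
    linarith

lemma good_first (g : ℝ → ℝ) (h : Good g) :
    ∃ A : ℝ, 0 < A ∧ ∀ z, (g z - z ^ 3) * deriv g z = A * z := by
  obtain ⟨han, hodd, hanti, hpos, -, -, hode⟩ := h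
  set P : ℝ → ℝ := fun w => g w * deriv g w - w ^ 3 * deriv g w with hP
  have g0 : g 0 = 0 := by have := hodd 0; simp at this; linarith
  have hPan : ∀ z, AnalyticAt ℝ P z := fun z =>
    ((han z).mul (han z).deriv).sub (AnalyticAt.mul (by fun_prop) (han z).deriv)
  have hP2 : ∀ z, deriv (deriv P) z = 0 := by
    intro z
    have h1 := ode_iff g han z
    rw [hode z, sub_self] at h1
    simpa only [iteratedDeriv_succ, iteratedDeriv_zero] using h1
  have hPc : ∀ z, deriv P z = deriv P 0 := fun z =>
    is_const_of_deriv_eq_zero (fun x => (hPan x).deriv.differentiableAt) hP2 z 0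
  set A := deriv P 0 with hA
  have hPl : ∀ z, P z = A * z := by
    intro z
    have h1 : ∀ x, HasDerivAt (fun z => P z - A * z) (deriv P x - A * 1) x := fun x =>
      (hPan x).differentiableAt.hasDerivAt.sub ((hasDerivAt_id x).const_mul A)
    have h2 := is_const_of_deriv_eq_zero (fun x => (h1 x).differentiableAt)
      (fun x => by rw [(h1 x).deriv, hPc]; ring) z 0
    have h3 : P 0 = 0 := by simp [hP, g0]
    simp only [h3] at h2
    linarith
  have hfin : ∀ z, (g z - z ^ 3) * deriv g z = A * z := by
    intro z; rw [← hPl]; simp only [hP]; ring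
  have hneg : ∀ z, 0 < z → g z < 0 := by
    intro z hz; have := hanti hz; rwa [g0] at this
  have hdn : ∀ z, deriv g z ≤ 0 := fun z => hanti.antitone.deriv_nonpos
  have hA0 : 0 ≤ A := by
    have h1 := hfin 1
    have := hneg 1 one_pos
    have := hdn 1
    nlinarith
  refine ⟨A, lt_of_le_of_ne hA0 ?_, hfin⟩
  intro hAz
  have hz : ∀ z, 0 < z → deriv g z = 0 := by
    intro z hz
    have h1 := hfin z
    rw [← hAz, zero_mul] at h1
    have h2 := hneg z hz
    have h3 : 0 < z ^ 3 := by positivity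
    rcases mul_eq_zero.1 h1 with h | h
    · linarith
    · exact h
  have hmono : MonotoneOn g (Ici 1) := by
    have hdiff : Differentiable ℝ g := fun x => (han x).differentiableAt
    apply monotoneOn_of_deriv_nonneg (convex_Ici 1) hdiff.continuous.continuousOn
      hdiff.differentiableOn
    intro x hx
    rw [interior_Ici] at hx
    rw [hz x (lt_trans one_pos hx)]
  have h1 := hmono (mem_Ici.2 le_rfl) (mem_Ici.2 one_le_two) one_le_two
  have h2 := hanti (one_lt_two (α := ℝ))
  linarith

lemma good_unique (L μ : ℝ) (hμ : 0 < μ) (hμL : μ ^ 3 = L) (hL : Tendsto HH atTop (𝓝 L))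
    (g : ℝ → ℝ) (h : Good g) : g = fun z => - (HH (μ * z) / μ ^ 3) := by
  obtain ⟨A, hA, hfin⟩ := good_first g h
  obtain ⟨han, hodd, hanti, hpos, -, htop, -⟩ := h
  have g0 : g 0 = 0 := by have := hodd 0; simp at this; linarith
  obtain ⟨l, hl, hlA⟩ : ∃ l : ℝ, 0 < l ∧ l ^ 4 = A := by
    refine ⟨Real.sqrt (Real.sqrt A), by positivity, ?_⟩
    rw [show 4 = 2 * 2 from rfl, pow_mul, Real.sq_sqrt (by positivity), Real.sq_sqrt hA.le]
  have hd : ∀ z, HasDerivAt (fun s => - (g (l * s) / l ^ 3)) (- (deriv g (l * z) * (l * 1) / l ^ 3)) z := by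
    intro z
    have h1 : HasDerivAt (fun z => g (l * z)) (deriv g (l * z) * (l * 1)) z :=
      (han (l * z)).differentiableAt.hasDerivAt.comp z ((hasDerivAt_id z).const_mul l)
    exact (h1.div_const (l ^ 3)).neg
  have key1 : ∀ s, 0 ≤ s → - (g (l * s) / l ^ 3) = HH s := by
    apply ode_unique (fun s => - (g (l * s) / l ^ 3)) HH (fun z => (hd z).differentiableAt) HH_diff
      (by simp [g0]) HH_zero _ HH_pos _ (fun s _ => HH_ode s)
    · intro s hs
      have h1 := hanti (by positivity : 0 < l * s)
      rw [g0] at h1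
      have := div_neg_of_neg_of_pos h1 (by positivity : 0 < l ^ 3)
      linarith
    · intro s hs
      rw [(hd s).deriv]
      have h1 := hfin (l * s)
      rw [← hlA] at h1
      have h2 : (-(g (l * s) / l ^ 3) + s ^ 3) * -(deriv g (l * s) * (l * 1) / l ^ 3)
          = ((g (l * s) - (l * s) ^ 3) * deriv g (l * s)) / l ^ 5 := by field_simp; ring
      rw [h2, h1]; field_simp
  have hlim : Tendsto (fun s => - (g (l * s) / l ^ 3)) atTop (𝓝 (-(-1 / l ^ 3))) :=
    ((htop.comp (tendsto_id.const_mul_atTop hl)).div_const (l ^ 3)).neg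
  have hlim2 : Tendsto (fun s => - (g (l * s) / l ^ 3)) atTop (𝓝 L) := by
    apply hL.congr'
    filter_upwards [eventually_ge_atTop 0] with s hs
    exact (key1 s hs).symm
  have hll := tendsto_nhds_unique hlim hlim2
  have hlμ : l * μ = 1 := by
    have h1 : (l * μ) ^ 3 = 1 := by
      rw [mul_pow, hμL, ← hll]; field_simp
    exact (pow_eq_one_iff_of_nonneg (by positivity) (by norm_num)).1 h1
  have hpos2 : ∀ z, 0 ≤ z → g z = - (HH (μ * z) / μ ^ 3) := by
    intro z hz
    have h1 := key1 (μ * z) (by positivity)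
    rw [← mul_assoc, hlμ, one_mul] at h1
    rw [← h1]
    have : l ^ 3 * μ ^ 3 = 1 := by rw [← mul_pow, hlμ, one_pow]
    field_simp
    rw [mul_assoc, this, mul_one]
  ext z
  rcases le_total 0 z with hz | hz
  · exact hpos2 z hz
  · have h1 := hpos2 (-z) (by linarith)
    rw [hodd, mul_neg, HH_odd] at h1
    rw [neg_div, neg_neg] at h1
    linarith

/-- there is exactly one real-analytic, odd, strictly decreasing
function `g`, positive for `z < 0`, with `g(−∞) = 1`, `g(+∞) = −1`, solving
the similarity ODE `(g g′)″ = 6 z g′ + 6 z² g″ + z³ g‴` of the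
third-order-in-time NDE `u_ttt = (u u_x)_{xx}`. -/
theorem stmt9 :
    ∃! g : ℝ → ℝ,
      (∀ z : ℝ, AnalyticAt ℝ g z) ∧
      (∀ z : ℝ, g (-z) = -g z) ∧
      StrictAnti g ∧
      (∀ z < (0:ℝ), 0 < g z) ∧
      Tendsto g atBot (nhds 1) ∧
      Tendsto g atTop (nhds (-1)) ∧
      (∀ z : ℝ,
        iteratedDeriv 2 (fun w => g w * deriv g w) z =
          6 * z * deriv g z + 6 * z ^ 2 * iteratedDeriv 2 g z
            + z ^ 3 * iteratedDeriv 3 g z) := by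

  obtain ⟨L, hL0, hL⟩ := HH_lim
  obtain ⟨μ, hμ, hμL⟩ : ∃ μ : ℝ, 0 < μ ∧ μ ^ 3 = L := by
    refine ⟨L ^ (1 / 3 : ℝ), by positivity, ?_⟩
    rw [← Real.rpow_natCast, ← Real.rpow_mul hL0.le]
    norm_num
  exact ⟨_, good_exists L μ hμ hμL hL, fun g hg => good_unique L μ hμ hμL hL g hg⟩
end

section
/- Let g ∈ C³([0,∞)) satisfy the similarity ODE (g g′)″(z) = (10/9) z g′(z) + (4/9) z² g″(z) on (0,∞), with g(0) = 0 and g(z) ≥ 0 for all z ≥ 0. Assume the decay conditions (g g′)′(z)·g′(z) → 0 and (g′(z))³ → 0 as z → ∞, and that the integrals ∫₀^∞ g (g″)² dz and ∫₀^∞ z (g′)² dz converge. Then the identity −(2/3)(g′(0))³ − ∫₀^∞ g(z)(g″(z))² dz = (2/3) ∫₀^∞ z (g′(z))² dz holds; consequently g′(0) ≤ 0. In particular, there is no such nonnegative similarity profile with g′(0) > 0, so the blow-up similarity mechanism of the equation u_{tt} = (u u_x)_{xx} cannot create the non-entropy shock S₊(x) = sign(x). -/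
open Set Filter MeasureTheory

/-- for a nonnegative C³([0,∞)) similarity profile of
`u_tt = (u u_x)_{xx}` with `g(0) = 0`, suitable decay and integrability, the
integral identity `−(2/3)(g′(0))³ − ∫₀^∞ g (g″)² = (2/3) ∫₀^∞ z (g′)²` holds;
hence `g′(0) ≤ 0` and no such profile can create the non-entropy shock `S₊`. -/
theorem stmt10
    (g g' g'' q : ℝ → ℝ)
    (hg : ContDiffOn ℝ 3 g (Ici 0))
    (hg' : g' = derivWithin g (Ici 0))
    (hg'' : g'' = derivWithin g' (Ici 0))
    (hq : q = derivWithin (fun w => g w * g' w) (Ici 0))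
    (hODE : ∀ z ∈ Ioi (0:ℝ),
      derivWithin q (Ici 0) z = (10/9) * z * g' z + (4/9) * z ^ 2 * g'' z)
    (h0 : g 0 = 0)
    (hpos : ∀ z ∈ Ici (0:ℝ), 0 ≤ g z)
    (hdecay1 : Tendsto (fun z => q z * g' z) atTop (nhds 0))
    (hdecay2 : Tendsto (fun z => (g' z) ^ 3) atTop (nhds 0))
    (hint1 : IntegrableOn (fun z => g z * (g'' z) ^ 2) (Ioi 0))
    (hint2 : IntegrableOn (fun z => z * (g' z) ^ 2) (Ioi 0)) :
    (-(2/3) * (g' 0) ^ 3 - ∫ z in Ioi (0:ℝ), g z * (g'' z) ^ 2 =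
      (2/3) * ∫ z in Ioi (0:ℝ), z * (g' z) ^ 2) ∧ g' 0 ≤ 0 := by
  have hU : UniqueDiffOn ℝ (Ici (0:ℝ)) := uniqueDiffOn_Ici 0
  have c1 : ContDiffOn ℝ 2 g' (Ici 0) := by
    rw [hg']; exact hg.derivWithin hU (by norm_num)
  have cgg : ContDiffOn ℝ 2 (fun w => g w * g' w) (Ici 0) :=
    (hg.of_le (by norm_num)).mul c1
  have cq : ContDiffOn ℝ 1 q (Ici 0) := by
    rw [hq]; exact cgg.derivWithin hU (by norm_num)
  have dg := hg.differentiableOn (by norm_num)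
  have dg' := c1.differentiableOn (by norm_num)
  have dq := cq.differentiableOn (by norm_num)
  have hqe : ∀ z ∈ Ici (0:ℝ), q z = g' z ^ 2 + g z * g'' z := by
    intro z hz
    have h1 : HasDerivWithinAt g (g' z) (Ici 0) z := by
      rw [hg']; exact (dg z hz).hasDerivWithinAt
    have h2 : HasDerivWithinAt g' (g'' z) (Ici 0) z := by
      rw [hg'']; exact (dg' z hz).hasDerivWithinAt
    rw [hq, (h1.fun_mul h2).derivWithin (hU z hz)]
    ring
  let F : ℝ → ℝ := fun z => q z * g' z - (1/3) * g' z ^ 3 - (2/9) * (z ^ 2 * g' z ^ 2)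
  have hFd : ∀ z ∈ Ioi (0:ℝ),
      HasDerivAt F ((2/3) * (z * g' z ^ 2) + g z * g'' z ^ 2) z := by
    intro z hz
    have hz0 : (0:ℝ) < z := hz
    have hz' : z ∈ Ici (0:ℝ) := hz0.le
    have hn : Ici (0:ℝ) ∈ nhds z := Ici_mem_nhds hz0
    have h2 : HasDerivAt g' (g'' z) z := by
      rw [hg'']; exact (dg' z hz').hasDerivWithinAt.hasDerivAt hn
    have h3 := (dq z hz').hasDerivWithinAt.hasDerivAt hn
    rw [hODE z hz] at h3
    have := ((h3.fun_mul h2).fun_sub ((h2.fun_pow 3).const_mul (1/3))).fun_sub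
      ((((hasDerivAt_id' z).fun_pow 2).fun_mul (h2.fun_pow 2)).const_mul (2/9))
    refine this.congr_deriv ?_
    rw [hqe z hz']
    norm_num
    ring
  have hFc : ContinuousWithinAt F (Ici 0) 0 := by
    have a := dq.continuousOn 0 self_mem_Ici
    have b := dg'.continuousOn 0 self_mem_Ici
    have c : ContinuousWithinAt (fun z : ℝ => z ^ 2) (Ici 0) 0 := by fun_prop
    exact ((a.mul b).sub ((b.pow 3).const_mul (1/3))).sub ((c.mul (b.pow 2)).const_mul (2/9))
  have hFi : IntegrableOn (fun z => (2/3) * (z * g' z ^ 2) + g z * g'' z ^ 2) (Ioi 0) :=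
    (hint2.const_mul (2/3)).add hint1
  obtain ⟨L, hL⟩ : ∃ L, Tendsto F atTop (nhds L) :=
    ⟨_, tendsto_limUnder_of_hasDerivAt_of_integrableOn_Ioi hFd hFi⟩
  have hM : Tendsto (fun z => z ^ 2 * g' z ^ 2) atTop (nhds (-(9/2) * L)) := by
    have := ((hdecay1.sub (hdecay2.const_mul (1/3))).sub hL).const_mul (9/2)
    refine (this.congr fun z => ?_).trans (by ring_nf; rfl)
    simp only [F]; ring
  have hL0 : L = 0 := by
    by_contra hne
    have hMn : 0 ≤ -(9/2) * L := ge_of_tendsto' hM fun z => by positivity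
    have hMp : 0 < -(9/2) * L := lt_of_le_of_ne hMn (by intro h; apply hne; linarith)
    set M := -(9/2) * L with hMdef
    obtain ⟨A, hA⟩ := eventually_atTop.1 (hM.eventually (lt_mem_nhds (half_lt_self hMp)))
    set B := max A 1
    have hB : IntegrableOn (fun z => (2/M) * (z * g' z ^ 2)) (Ioi B) :=
      (hint2.mono_set (Ioi_subset_Ioi (by positivity))).const_mul _
    apply not_integrableOn_Ioi_inv (a := B)
    refine Integrable.mono' hB (by fun_prop) ?_
    refine (ae_restrict_iff' measurableSet_Ioi).2 (Eventually.of_forall fun z hz => ?_)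
    have hzB : B < z := hz
    have hz0 : 0 < z := lt_of_lt_of_le one_pos ((le_max_right A 1).trans hzB.le)
    have := hA z ((le_max_left A 1).trans hzB.le)
    rw [Real.norm_of_nonneg (by positivity), inv_le_iff_one_le_mul₀ hz0]
    have e : 2 / M * (z * g' z ^ 2) * z = (z ^ 2 * g' z ^ 2) / (M / 2) := by
      field_simp
    rw [e, one_le_div (by positivity)]
    exact this.le
  rw [hL0] at hL
  have key := integral_Ioi_of_hasDerivAt_of_tendsto hFc hFd hFi hL
  rw [integral_add (hint2.const_mul (2/3)) hint1, integral_const_mul] at key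
  have hF0 : F 0 = (2/3) * g' 0 ^ 3 := by
    simp only [F]; rw [hqe 0 self_mem_Ici, h0]; ring
  rw [hF0] at key
  refine ⟨by linarith, ?_⟩
  have i1 : 0 ≤ ∫ z in Ioi (0:ℝ), g z * (g'' z) ^ 2 :=
    setIntegral_nonneg measurableSet_Ioi fun z hz =>
      mul_nonneg (hpos z (Ioi_subset_Ici_self hz)) (sq_nonneg _)
  have i2 : 0 ≤ ∫ z in Ioi (0:ℝ), z * (g' z) ^ 2 :=
    setIntegral_nonneg measurableSet_Ioi fun z hz =>
      mul_nonneg (le_of_lt hz) (sq_nonneg _)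
  by_contra! hc
  have : 0 < g' 0 ^ 3 := by positivity
  linarith
end

section
/- Define f_c : ℝ → ℝ by f_c(y) = 2 cos²(y/2) = 1 + cos y for |y| ≤ π and f_c(y) = 0 for |y| > π, and set u_c(x,t) := f_c(x + 3t). Then u_c is a weak solution of the Rosenau–Hyman K(2,2) equation u_t = (u u_x)_{xx} + 4 u u_x on ℝ × ℝ: for every test function φ ∈ C_c^∞(ℝ × ℝ), ∬ u_c ∂_t φ dx dt = (1/2) ∬ u_c² ∂_x³ φ dx dt + 2 ∬ u_c² ∂_x φ dx dt. -/
open Set Filter MeasureTheory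

namespace Compacton

/-- smooth compactly supported functions on the plane -/
def Test (g : ℝ × ℝ → ℝ) : Prop := ContDiff ℝ (⊤ : ℕ∞) g ∧ HasCompactSupport g

/-- directional derivative -/
noncomputable def Dir (v : ℝ × ℝ) (g : ℝ × ℝ → ℝ) : ℝ × ℝ → ℝ := fun p => fderiv ℝ g p v

lemma Test.dir {g : ℝ × ℝ → ℝ} (h : Test g) (v : ℝ × ℝ) : Test (Dir v g) := by
  refine ⟨?_, ?_⟩
  · exact (h.1.fderiv_right (m := ((⊤ : ℕ∞) : WithTop ℕ∞)) (by simp)).clm_apply contDiff_const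
  · exact h.2.fderiv_apply ℝ v

lemma Test.hasDerivAt {g : ℝ × ℝ → ℝ} (h : Test g) (a b : ℝ → ℝ) (a' b' s : ℝ)
    (ha : HasDerivAt a a' s) (hb : HasDerivAt b b' s) :
    HasDerivAt (fun s => g (a s, b s)) (Dir (a', b') g (a s, b s)) s := by
  have hd : DifferentiableAt ℝ g (a s, b s) := (h.1.differentiable (by simp)) _
  exact hd.hasFDerivAt.comp_hasDerivAt s (ha.prodMk hb)

lemma Test.integrable {g : ℝ × ℝ → ℝ} (h : Test g) {c : ℝ → ℝ} (hc : Continuous c) :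
    Integrable (fun p : ℝ × ℝ => c p.2 * g p) (volume.prod volume) := by
  have : Continuous (fun p : ℝ × ℝ => c p.2 * g p) :=
    (hc.comp continuous_snd).mul h.1.continuous
  exact this.integrable_of_hasCompactSupport (h.2.mul_left)

lemma Test.slice {g : ℝ × ℝ → ℝ} (h : Test g) (y : ℝ) :
    Integrable (fun t : ℝ => g (t, y)) := by
  have hc : Continuous (fun t : ℝ => g (t, y)) := h.1.continuous.comp (by fun_prop)
  refine hc.integrable_of_hasCompactSupport ?_
  have : Topology.IsClosedEmbedding (fun t : ℝ => (t, y)) :=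
    Function.LeftInverse.isClosedEmbedding (f := Prod.fst) (fun _ => rfl) (by fun_prop)
      (by fun_prop)
  exact h.2.comp_isClosedEmbedding this

lemma Test.slice' {g : ℝ × ℝ → ℝ} (h : Test g) {c : ℝ → ℝ} (hc : Continuous c) (t : ℝ) :
    Integrable (fun y : ℝ => c y * g (t, y)) := by
  have hc : Continuous (fun y : ℝ => c y * g (t, y)) :=
    hc.mul (h.1.continuous.comp (by fun_prop))
  refine hc.integrable_of_hasCompactSupport ?_
  have : Topology.IsClosedEmbedding (fun y : ℝ => (t, y)) :=
    Function.LeftInverse.isClosedEmbedding (f := Prod.snd) (fun _ => rfl) (by fun_prop)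
      (by fun_prop)
  exact (h.2.comp_isClosedEmbedding this).mul_left

lemma time_zero {g : ℝ × ℝ → ℝ} (h : Test g) {c : ℝ → ℝ} (hc : Continuous c) :
    ∫ t : ℝ, ∫ y : ℝ, c y * Dir (1, 0) g (t, y) = 0 := by
  rw [integral_integral_swap (f := fun t y => c y * Dir (1, 0) g (t, y))
    ((h.dir (1, 0)).integrable hc)]
  have : ∀ y : ℝ, ∫ t : ℝ, c y * Dir (1, 0) g (t, y) = 0 := by
    intro y
    rw [integral_const_mul, integral_eq_zero_of_hasDerivAt_of_integrable
      (f := fun t => g (t, y)) _ ((h.dir (1, 0)).slice y) (h.slice y), mul_zero]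
    intro t
    exact h.hasDerivAt (fun t => t) (fun _ => y) 1 0 t (hasDerivAt_id t) (hasDerivAt_const t y)
  simp [this]

lemma restrict (fc : ℝ → ℝ)
    (hfc : ∀ y : ℝ, fc y = if |y| ≤ Real.pi then 1 + Real.cos y else 0)
    (G H : ℝ → ℝ) (hGH : ∀ y, fc y = 1 + Real.cos y → H y = G y) (h0 : ∀ y, fc y = 0 → H y = 0) :
    ∫ y, H y = ∫ y in (-Real.pi)..Real.pi, G y := by
  rw [intervalIntegral.integral_of_le (by linarith [Real.pi_pos]), ← integral_Icc_eq_integral_Ioc,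
    ← integral_indicator measurableSet_Icc]
  congr 1
  ext y
  by_cases hy : |y| ≤ Real.pi
  · rw [indicator_of_mem (by simpa [abs_le] using hy)]
    exact hGH y (by simp [hfc, hy])
  · rw [indicator_of_notMem (by simpa [abs_le] using hy)]
    exact h0 y (by simp [hfc, hy])

lemma space_id (fc : ℝ → ℝ)
    (hfc : ∀ y : ℝ, fc y = if |y| ≤ Real.pi then 1 + Real.cos y else 0)
    (p0 p1 p2 p3 : ℝ → ℝ) (h0 : ∀ y, HasDerivAt p0 (p1 y) y) (h1 : ∀ y, HasDerivAt p1 (p2 y) y)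
    (h2 : ∀ y, HasDerivAt p2 (p3 y) y) (c3 : Continuous p3) :
    ∫ y, ((1/2) * (fc y ^ 2 * p3 y) + 2 * (fc y ^ 2 * p1 y) - 3 * (fc y * p1 y)) = 0 := by
  have c1 : Continuous p1 := continuous_iff_continuousAt.2 fun y => (h1 y).continuousAt
  rw [restrict fc hfc (fun y => (1/2) * ((1 + Real.cos y) ^ 2 * p3 y)
      + 2 * ((1 + Real.cos y) ^ 2 * p1 y) - 3 * ((1 + Real.cos y) * p1 y)) _
      (fun y hy => by simp only [hy]) (fun y hy => by simp [hy])]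
  rw [intervalIntegral.integral_eq_sub_of_hasDerivAt (f := fun y =>
    (1/2) * ((1 + Real.cos y) ^ 2 * p2 y - (-2 * (1 + Real.cos y) * Real.sin y) * p1 y
      + (2 * Real.sin y ^ 2 - 2 * (1 + Real.cos y) * Real.cos y) * p0 y)
      + 2 * ((1 + Real.cos y) ^ 2 * p0 y) - 3 * ((1 + Real.cos y) * p0 y))]
  · simp
  · intro y _
    have hC := (Real.hasDerivAt_cos y).const_add 1
    have hS := Real.hasDerivAt_sin y
    have A := ((hC.pow 2).mul (h2 y)).sub (((hC.const_mul (-2)).mul hS).mul (h1 y))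
    have B := (((hS.pow 2).const_mul 2).sub
      ((hC.const_mul 2).mul (Real.hasDerivAt_cos y))).mul (h0 y)
    have E := ((((A.add B).const_mul (1/2)).add (((hC.pow 2).mul (h0 y)).const_mul 2))).sub
      ((hC.mul (h0 y)).const_mul 3)
    refine E.congr_deriv ?_
    simp
    ring
  · exact Continuous.intervalIntegrable (by fun_prop) _ _

end Compacton

open Compacton in
/-- the Rosenau–Hyman compacton `u_c(x,t) = f_c(x+3t)`, with
`f_c(y) = 1 + cos y` on `|y| ≤ π` and `0` outside, is a weak solution of the
K(2,2) equation `u_t = (u u_x)_{xx} + 4 u u_x`. -/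
theorem stmt11
    (fc : ℝ → ℝ)
    (hfc : ∀ y : ℝ, fc y = if |y| ≤ Real.pi then 1 + Real.cos y else 0)
    (φ : ℝ → ℝ → ℝ)
    (hφ : ContDiff ℝ (⊤ : ℕ∞) (fun p : ℝ × ℝ => φ p.1 p.2))
    (hφc : HasCompactSupport (fun p : ℝ × ℝ => φ p.1 p.2)) :
    (∫ t : ℝ, ∫ x : ℝ, fc (x + 3 * t) * deriv (fun s => φ x s) t) =
      (1/2) * (∫ t : ℝ, ∫ x : ℝ,
          (fc (x + 3 * t)) ^ 2 * iteratedDeriv 3 (fun y => φ y t) x)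
        + 2 * (∫ t : ℝ, ∫ x : ℝ,
          (fc (x + 3 * t)) ^ 2 * deriv (fun y => φ y t) x) := by
  have hcont : Continuous fc := by
    have : fc = fun y => 1 + Real.cos (min |y| Real.pi) := by
      ext y
      rw [hfc]
      split_ifs with h
      · rw [min_eq_left h, Real.cos_abs]
      · rw [min_eq_right (not_le.1 h).le]; simp
    rw [this]; fun_prop
  have hcont2 : Continuous (fun y => fc y ^ 2) := hcont.pow 2
  obtain ⟨g, hgdef⟩ : ∃ g : ℝ × ℝ → ℝ, g = fun p => φ (p.2 - 3 * p.1) p.1 := ⟨_, rfl⟩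
  have hφg : ∀ x t, φ x t = g (t, x + 3 * t) := by intro x t; simp [hgdef]
  have hg : Test g := by
    refine ⟨?_, ?_⟩
    · rw [hgdef]
      exact hφ.comp (g := fun p : ℝ × ℝ => φ p.1 p.2)
        (f := fun p : ℝ × ℝ => (p.2 - 3 * p.1, p.1)) (by fun_prop)
    · let e : ℝ × ℝ ≃ₜ ℝ × ℝ :=
        { toFun := fun p => (p.2 - 3 * p.1, p.1)
          invFun := fun p => (p.2, p.1 + 3 * p.2)
          left_inv := fun p => by simp
          right_inv := fun p => by simp
          continuous_toFun := by fun_prop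
          continuous_invFun := by fun_prop }
      rw [hgdef]
      exact hφc.comp_homeomorph e
  have hy : ∀ (k : ℝ × ℝ → ℝ), Test k → ∀ t : ℝ, deriv (fun x => k (t, x + 3 * t))
      = fun x => Dir (0, 1) k (t, x + 3 * t) := by
    intro k hk t
    ext x
    exact (hk.hasDerivAt (fun _ => t) (fun x => x + 3 * t) 0 1 x (hasDerivAt_const x t)
      ((hasDerivAt_id x).add_const (3 * t))).deriv
  have ht : ∀ x t : ℝ, deriv (fun s => g (s, x + 3 * s)) t
      = Dir (1, 0) g (t, x + 3 * t) + 3 * Dir (0, 1) g (t, x + 3 * t) := by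
    intro x t
    have h3 : HasDerivAt (fun s : ℝ => x + 3 * s) 3 t := by
      simpa using ((hasDerivAt_id t).const_mul 3).const_add x
    rw [(hg.hasDerivAt (fun s => s) (fun s => x + 3 * s) 1 3 t (hasDerivAt_id t) h3).deriv]
    have : ((1 : ℝ), (3 : ℝ)) = (1, 0) + (3 : ℝ) • (0, 1) := by simp
    simp only [Dir]
    rw [this, map_add, map_smul, smul_eq_mul]
  have hg1 := hg.dir (0, 1)
  have hg2 := hg1.dir (0, 1)
  have hg3 := hg2.dir (0, 1)
  have hgt := hg.dir (1, 0)
  have hit : ∀ t : ℝ, iteratedDeriv 3 (fun x => g (t, x + 3 * t))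
      = fun x => Dir (0, 1) (Dir (0, 1) (Dir (0, 1) g)) (t, x + 3 * t) := by
    intro t
    rw [iteratedDeriv_succ, iteratedDeriv_succ, iteratedDeriv_one, hy g hg, hy _ hg1, hy _ hg2]
  simp only [hφg, hy g hg, ht, hit]
  have tr : ∀ (t : ℝ) (k : ℝ → ℝ), ∫ x : ℝ, k (x + 3 * t) = ∫ y : ℝ, k y := fun t k =>
    integral_add_right_eq_self k (3 * t)
  have e1 : ∀ t : ℝ, ∫ x : ℝ, fc (x + 3 * t) *
      (Dir (1, 0) g (t, x + 3 * t) + 3 * Dir (0, 1) g (t, x + 3 * t))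
      = (∫ y, fc y * Dir (1, 0) g (t, y)) + 3 * ∫ y, fc y * Dir (0, 1) g (t, y) := by
    intro t
    rw [tr t (fun y => fc y * (Dir (1, 0) g (t, y) + 3 * Dir (0, 1) g (t, y))),
      ← integral_const_mul, ← integral_add (hgt.slice' hcont t)
        ((hg1.slice' hcont t).const_mul 3)]
    congr 1; ext y; ring
  have e2 : ∀ t : ℝ, ∫ x : ℝ, fc (x + 3 * t) ^ 2 *
      Dir (0, 1) (Dir (0, 1) (Dir (0, 1) g)) (t, x + 3 * t)
      = ∫ y, fc y ^ 2 * Dir (0, 1) (Dir (0, 1) (Dir (0, 1) g)) (t, y) := fun t =>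
    tr t (fun y => fc y ^ 2 * Dir (0, 1) (Dir (0, 1) (Dir (0, 1) g)) (t, y))
  have e3 : ∀ t : ℝ, ∫ x : ℝ, fc (x + 3 * t) ^ 2 * Dir (0, 1) g (t, x + 3 * t)
      = ∫ y, fc y ^ 2 * Dir (0, 1) g (t, y) := fun t =>
    tr t (fun y => fc y ^ 2 * Dir (0, 1) g (t, y))
  simp only [e1, e2, e3]
  have i1 := (hgt.integrable hcont).integral_prod_left
  have i2 := (hg1.integrable hcont).integral_prod_left
  have i3 := (hg3.integrable hcont2).integral_prod_left
  have i4 := (hg1.integrable hcont2).integral_prod_left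
  rw [integral_add i1 (i2.const_mul 3), time_zero hg hcont, zero_add, ← integral_const_mul,
    ← integral_const_mul, ← integral_add (i3.const_mul _) (i4.const_mul _)]
  congr 1
  ext t
  have hd : ∀ (k : ℝ × ℝ → ℝ), Test k → ∀ y : ℝ,
      HasDerivAt (fun y => k (t, y)) (Dir (0, 1) k (t, y)) y := fun k hk y =>
    hk.hasDerivAt (fun _ => t) (fun y => y) 0 1 y (hasDerivAt_const y t) (hasDerivAt_id y)
  have key := space_id fc hfc _ _ _ _ (hd g hg) (hd _ hg1) (hd _ hg2)
    (hg3.1.continuous.comp (by fun_prop))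
  have i5 : Integrable (fun y =>
      1 / 2 * (fc y ^ 2 * Dir (0, 1) (Dir (0, 1) (Dir (0, 1) g)) (t, y))
        + 2 * (fc y ^ 2 * Dir (0, 1) g (t, y))) :=
    ((hg3.slice' hcont2 t).const_mul _).add ((hg1.slice' hcont2 t).const_mul _)
  rw [integral_sub i5 ((hg1.slice' hcont t).const_mul _), integral_add ((hg3.slice' hcont2 t).const_mul _)
    ((hg1.slice' hcont2 t).const_mul _), integral_const_mul, integral_const_mul,
    integral_const_mul] at key
  dsimp only
  linarith
end

section
/- Define h_c : ℝ → ℝ by h_c(y) = cos y for |y| ≤ π/2 and h_c(y) = 0 for |y| > π/2, and set u(x,t) := h_c(x + 2t). Then at every point (x,t) with |x + 2t| < π/2 the function u is smooth and satisfies the cubic compacton equation u_t = (u² u_x)_{xx} + 9 u² u_x classically (and trivially also wherever |x + 2t| > π/2, since u ≡ 0 there). -/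
open Set Filter

theorem pde_congr (h g : ℝ → ℝ) (x t : ℝ) (hg : h =ᶠ[nhds (x + 2 * t)] g)
    (H : deriv (fun s => g (x + 2 * s)) t =
        iteratedDeriv 2 (fun y => (g (y + 2 * t)) ^ 2 * deriv (fun z => g (z + 2 * t)) y) x
          + 9 * (g (x + 2 * t)) ^ 2 * deriv (fun y => g (y + 2 * t)) x) :
    deriv (fun s => h (x + 2 * s)) t =
        iteratedDeriv 2 (fun y => (h (y + 2 * t)) ^ 2 * deriv (fun z => h (z + 2 * t)) y) x
          + 9 * (h (x + 2 * t)) ^ 2 * deriv (fun y => h (y + 2 * t)) x := by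
  have ct : Tendsto (fun s : ℝ => x + 2 * s) (nhds t) (nhds (x + 2 * t)) :=
    Continuous.tendsto (by fun_prop) t
  have cx : Tendsto (fun y : ℝ => y + 2 * t) (nhds x) (nhds (x + 2 * t)) :=
    Continuous.tendsto (by fun_prop) x
  have e1 : (fun s => h (x + 2 * s)) =ᶠ[nhds t] (fun s => g (x + 2 * s)) := ct.eventually hg
  have e2 : (fun s => h (s + 2 * t)) =ᶠ[nhds x] (fun s => g (s + 2 * t)) := cx.eventually hg
  have e3 : (fun y => (h (y + 2 * t)) ^ 2 * deriv (fun z => h (z + 2 * t)) y) =ᶠ[nhds x]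
      (fun y => (g (y + 2 * t)) ^ 2 * deriv (fun z => g (z + 2 * t)) y) := by
    filter_upwards [e2, e2.deriv] with y h1 h2
    rw [h2, h1]
  rw [e1.deriv_eq, e2.deriv_eq, e3.iteratedDeriv_eq 2, hg.eq_of_nhds]
  exact H

theorem pde_cos (x t : ℝ) : deriv (fun s => Real.cos (x + 2 * s)) t =
        iteratedDeriv 2 (fun y => (Real.cos (y + 2 * t)) ^ 2 *
          deriv (fun z => Real.cos (z + 2 * t)) y) x
          + 9 * (Real.cos (x + 2 * t)) ^ 2 * deriv (fun y => Real.cos (y + 2 * t)) x := by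
  have ha : ∀ y : ℝ, HasDerivAt (fun z : ℝ => z + 2 * t) 1 y := fun y =>
    (hasDerivAt_id y).add_const _
  have hcos : ∀ y : ℝ, HasDerivAt (fun z => Real.cos (z + 2 * t)) (-Real.sin (y + 2 * t)) y :=
    fun y => by simpa using (ha y).cos
  have hsin : ∀ y : ℝ, HasDerivAt (fun z => Real.sin (z + 2 * t)) (Real.cos (y + 2 * t)) y :=
    fun y => by simpa using (ha y).sin
  have d0 : HasDerivAt (fun s => Real.cos (x + 2 * s)) (-Real.sin (x + 2 * t) * 2) t := by
    have : HasDerivAt (fun s : ℝ => x + 2 * s) 2 t := by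
      simpa using ((hasDerivAt_id t).const_mul 2).const_add x
    exact this.cos
  have d1 : deriv (fun z => Real.cos (z + 2 * t)) = fun y => -Real.sin (y + 2 * t) :=
    funext fun y => (hcos y).deriv
  have d2 : deriv (fun y => Real.cos (y + 2 * t) ^ 2 * -Real.sin (y + 2 * t)) =
      fun y => 2 * Real.cos (y + 2 * t) * Real.sin (y + 2 * t) ^ 2
        - Real.cos (y + 2 * t) ^ 3 := by
    funext y
    refine ((((hcos y).pow 2).mul (hsin y).neg).congr_deriv ?_).deriv
    simp
    ring
  have d3 : deriv (fun y => 2 * Real.cos (y + 2 * t) * Real.sin (y + 2 * t) ^ 2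
        - Real.cos (y + 2 * t) ^ 3) x =
      -2 * Real.sin (x + 2 * t) ^ 3
        + 7 * Real.cos (x + 2 * t) ^ 2 * Real.sin (x + 2 * t) := by
    refine (((((hcos x).const_mul 2).mul ((hsin x).pow 2)).sub
      ((hcos x).pow 3)).congr_deriv ?_).deriv
    simp
    ring
  rw [d0.deriv, iteratedDeriv_succ, iteratedDeriv_one, d1, d2, d3]
  linear_combination (2 * Real.sin (x + 2 * t)) * Real.sin_sq_add_cos_sq (x + 2 * t)

/-- the travelling compacton `u(x,t) = h_c(x+2t)`, with profile
`cos` on `|y| ≤ π/2` extended by zero, is smooth and satisfies the cubic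
compacton equation `u_t = (u² u_x)_{xx} + 9 u² u_x` classically wherever
`|x+2t| < π/2`, and trivially wherever `|x+2t| > π/2`. -/
theorem stmt13
    (hc : ℝ → ℝ)
    (hhc : ∀ y : ℝ, hc y = if |y| ≤ Real.pi / 2 then Real.cos y else 0)
    (u : ℝ → ℝ → ℝ)
    (hu : ∀ x t : ℝ, u x t = hc (x + 2 * t)) :
    (∀ x t : ℝ, |x + 2 * t| < Real.pi / 2 →
      ContDiffAt ℝ (⊤ : ℕ∞) (fun p : ℝ × ℝ => u p.1 p.2) (x, t) ∧
      deriv (fun s => u x s) t =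
        iteratedDeriv 2 (fun y => (u y t) ^ 2 * deriv (fun z => u z t) y) x
          + 9 * (u x t) ^ 2 * deriv (fun y => u y t) x) ∧
    (∀ x t : ℝ, Real.pi / 2 < |x + 2 * t| →
      deriv (fun s => u x s) t =
        iteratedDeriv 2 (fun y => (u y t) ^ 2 * deriv (fun z => u z t) y) x
          + 9 * (u x t) ^ 2 * deriv (fun y => u y t) x) := by
  obtain rfl : u = fun x t => hc (x + 2 * t) := by
    funext x t
    exact hu x t
  refine ⟨fun x t hx => ?_, fun x t hx => ?_⟩
  · have hg : hc =ᶠ[nhds (x + 2 * t)] Real.cos := by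
      have : ∀ᶠ y in nhds (x + 2 * t), |y| < Real.pi / 2 :=
        continuous_abs.continuousAt.eventually_lt continuousAt_const hx
      filter_upwards [this] with y hy
      rw [hhc, if_pos hy.le]
    refine ⟨?_, pde_congr hc Real.cos x t hg (pde_cos x t)⟩
    have c : Tendsto (fun p : ℝ × ℝ => p.1 + 2 * p.2) (nhds (x, t)) (nhds (x + 2 * t)) :=
      Continuous.tendsto (f := fun p : ℝ × ℝ => p.1 + 2 * p.2) (by fun_prop) (x, t)
    have e : (fun p : ℝ × ℝ => hc (p.1 + 2 * p.2)) =ᶠ[nhds (x, t)]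
        (fun p : ℝ × ℝ => Real.cos (p.1 + 2 * p.2)) := c.eventually hg
    refine ContDiffAt.congr_of_eventuallyEq ?_ e
    apply ContDiff.contDiffAt
    fun_prop
  · have hg : hc =ᶠ[nhds (x + 2 * t)] (fun _ => 0) := by
      have : ∀ᶠ y in nhds (x + 2 * t), Real.pi / 2 < |y| :=
        continuousAt_const.eventually_lt continuous_abs.continuousAt hx
      filter_upwards [this] with y hy
      rw [hhc, if_neg hy.not_ge]
    refine pde_congr hc (fun _ => 0) x t hg ?_
    simp [iteratedDeriv_succ]
end

section
/- Define f_c(y) = 2 cos²(y/2) for |y| ≤ π and f_c(y) = 0 for |y| > π. There exists δ₀ > 0 such that for every δ ∈ (0, δ₀) the ordinary differential equation 3 f = (f f′)′ + 2 f² + C_δ, with constant of integration C_δ = 3δ − 2δ², admits a strictly positive real-analytic solution f_δ : ℝ → (0,∞) with f_δ(y) → δ as y → ±∞; moreover f_δ → f_c uniformly on ℝ as δ → 0⁺. Consequently the Rosenau–Hyman compacton u_c(x,t) = f_c(x + 3t) is the uniform limit of smooth positive travelling-wave solutions of the K(2,2) equation. -/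
open Set Filter

open scoped ContDiff

namespace K22

/-- the angle as a function of the uniformizing parameter -/
noncomputable def th (κ w : ℝ) : ℝ := 2 * Real.arctan (κ * (Real.sinh w / Real.cosh w))

/-- common denominator -/
noncomputable def dd (κ w : ℝ) : ℝ := Real.cosh w ^ 2 + κ ^ 2 * Real.sinh w ^ 2

/-- space variable as a function of the uniformizing parameter -/
noncomputable def yy (κ ε w : ℝ) : ℝ := th κ w + 2 * ε * w

lemma dd_pos (κ w : ℝ) : 0 < dd κ w := by
  have := Real.cosh_pos w
  unfold dd; positivity

lemma dd_ge (κ w : ℝ) : w ^ 2 ≤ dd κ w := by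
  have h1 : w ^ 2 ≤ Real.sinh w ^ 2 := by
    rw [sq_le_sq]
    rcases le_total 0 w with h | h
    · have := Real.self_le_sinh_iff.2 h
      rw [abs_of_nonneg h, abs_of_nonneg (by linarith)]; exact this
    · have := Real.sinh_le_self_iff.2 h
      rw [abs_of_nonpos h, abs_of_nonpos (by linarith)]; linarith
  have h2 := Real.cosh_sq w
  have : 0 ≤ κ ^ 2 * Real.sinh w ^ 2 := by positivity
  unfold dd; linarith

lemma cos_th (κ w : ℝ) : 1 + Real.cos (th κ w) = 2 * Real.cosh w ^ 2 / dd κ w := by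
  have hc := (Real.cosh_pos w).ne'
  have hd := (dd_pos κ w).ne'
  have : 1 + (κ * (Real.sinh w / Real.cosh w)) ^ 2 = dd κ w / Real.cosh w ^ 2 := by
    unfold dd; field_simp
  rw [th, Real.cos_two_mul, Real.cos_sq_arctan, this]
  field_simp
  ring

lemma hasDeriv_th (κ w : ℝ) : HasDerivAt (th κ) (2 * κ / dd κ w) w := by
  have hc := (Real.cosh_pos w).ne'
  have hd := (dd_pos κ w).ne'
  have h1 := (((Real.hasDerivAt_sinh w).div (Real.hasDerivAt_cosh w) hc).const_mul κ).arctan.const_mul 2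
  have e : 1 + (κ * (Real.sinh w / Real.cosh w)) ^ 2 = dd κ w / Real.cosh w ^ 2 := by
    unfold dd; field_simp
  convert! h1 using 1
  simp only [Pi.div_apply]
  rw [e]
  have h2 := Real.cosh_sq w
  have h3 : Real.cosh w * Real.cosh w - Real.sinh w * Real.sinh w = 1 := by nlinarith
  rw [h3]
  field_simp

lemma contDiff_yy (κ ε : ℝ) : ContDiff ℝ ω (yy κ ε) := by
  have h : ContDiff ℝ ω (fun w => Real.sinh w / Real.cosh w) :=
    Real.contDiff_sinh.div Real.contDiff_cosh (fun w => (Real.cosh_pos w).ne')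
  have : ContDiff ℝ ω (fun w => 2 * Real.arctan (κ * (Real.sinh w / Real.cosh w)) + 2 * ε * w) :=
    (contDiff_const.mul (Real.contDiff_arctan.comp (contDiff_const.mul h))).add (contDiff_const.mul contDiff_id)
  exact this

lemma contDiff_th (κ : ℝ) : ContDiff ℝ ω (th κ) := by
  have := contDiff_yy κ 0
  convert! this using 1
  ext w; simp [yy]

lemma hasDeriv_yy (κ ε w : ℝ) : HasDerivAt (yy κ ε) (2 * κ / dd κ w + 2 * ε) w := by
  have := (hasDeriv_th κ w).add ((hasDerivAt_id w).const_mul (2 * ε))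
  simpa using! this

lemma th_lt (κ w : ℝ) : |th κ w| < Real.pi := by
  have h1 := Real.arctan_lt_pi_div_two (κ * (Real.sinh w / Real.cosh w))
  have h2 := Real.neg_pi_div_two_lt_arctan (κ * (Real.sinh w / Real.cosh w))
  rw [abs_lt]; unfold th; constructor <;> linarith

lemma th_nonneg {κ w : ℝ} (hκ : 0 < κ) (hw : 0 ≤ w) : 0 ≤ th κ w := by
  have := Real.sinh_nonneg_iff.2 hw
  have := Real.cosh_pos w
  have : 0 ≤ Real.arctan (κ * (Real.sinh w / Real.cosh w)) := Real.arctan_nonneg.2 (by positivity)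
  unfold th; linarith

lemma th_neg (κ w : ℝ) : th κ (-w) = - th κ w := by
  simp [th, neg_div, Real.arctan_neg]

lemma abs_th_le {κ ε w : ℝ} (hκ : 0 < κ) (hε : 0 < ε) : |th κ w| ≤ |yy κ ε w| := by
  rcases le_total 0 w with h | h
  · have h1 := th_nonneg hκ h
    have : 0 ≤ 2 * ε * w := by positivity
    unfold yy
    rw [abs_of_nonneg h1, abs_of_nonneg (by linarith)]; linarith
  · have h1 := th_nonneg hκ (neg_nonneg.2 h)
    rw [th_neg] at h1
    have : 0 ≤ 2 * ε * (-w) := mul_nonneg (by linarith) (by linarith)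
    unfold yy
    rw [abs_of_nonpos (by linarith), abs_of_nonpos (by linarith)]; linarith

lemma exists_homeo {κ ε : ℝ} (hκ : 0 < κ) (hε : 0 < ε) :
    ∃ e : ℝ ≃o ℝ, ∀ w, e w = yy κ ε w := by
  have hm : StrictMono (yy κ ε) := by
    apply strictMono_of_deriv_pos
    intro w
    rw [(hasDeriv_yy κ ε w).deriv]
    have := dd_pos κ w
    positivity
  have ht : Tendsto (yy κ ε) atTop atTop := by
    apply tendsto_atTop_mono (f := fun w => -Real.pi + 2 * ε * w)
    · intro w
      have := (abs_lt.1 (th_lt κ w)).1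
      unfold yy; linarith
    · exact tendsto_atTop_add_const_left _ _ (tendsto_id.const_mul_atTop (by positivity))
  have hb : Tendsto (yy κ ε) atBot atBot := by
    apply tendsto_atBot_mono (f := fun w => Real.pi + 2 * ε * w)
    · intro w
      have := (abs_lt.1 (th_lt κ w)).2
      unfold yy; linarith
    · exact tendsto_atBot_add_const_left _ _ (tendsto_id.const_mul_atBot (by positivity))
  have hs : Function.Surjective (yy κ ε) := (contDiff_yy κ ε).continuous.surjective ht hb
  exact ⟨hm.orderIsoOfSurjective _ hs, fun w => rfl⟩

/-- Lipschitz-type bound of the compacton profile. -/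
lemma fc_bound1 {fc : ℝ → ℝ}
    (hfc : ∀ y : ℝ, fc y = if |y| ≤ Real.pi then 2 * Real.cos (y / 2) ^ 2 else 0)
    {t y : ℝ} (ht : |t| < Real.pi) : |1 + Real.cos t - fc y| ≤ |t - y| := by
  rw [hfc]
  split_ifs with h
  · have : 2 * Real.cos (y / 2) ^ 2 = 1 + Real.cos y := by
      rw [Real.cos_sq]; ring_nf
    rw [this]
    have := Real.abs_cos_sub_cos_le t y
    convert this using 2; ring
  · push Not at h
    have ht' := abs_lt.1 ht
    rw [sub_zero]
    rcases lt_abs.1 h with h | h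
    · have := Real.abs_cos_sub_cos_le t Real.pi
      rw [Real.cos_pi, abs_of_neg (a := t - Real.pi) (by linarith)] at this
      rw [abs_of_neg (a := t - y) (by linarith)]
      have e : 1 + Real.cos t = Real.cos t - -1 := by ring
      rw [e]; linarith
    · have := Real.abs_cos_sub_cos_le t (-Real.pi)
      rw [Real.cos_neg, Real.cos_pi, abs_of_pos (a := t - -Real.pi) (by linarith)] at this
      rw [abs_of_pos (a := t - y) (by linarith)]
      have e : 1 + Real.cos t = Real.cos t - -1 := by ring
      rw [e]; linarith

lemma fc_bound2 {fc : ℝ → ℝ}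
    (hfc : ∀ y : ℝ, fc y = if |y| ≤ Real.pi then 2 * Real.cos (y / 2) ^ 2 else 0)
    {t y : ℝ} (ht : |t| ≤ |y|) : |1 + Real.cos t - fc y| ≤ 1 + Real.cos t := by
  have h0 := Real.neg_one_le_cos t
  rw [hfc]
  split_ifs with h
  · have e : 2 * Real.cos (y / 2) ^ 2 = 1 + Real.cos y := by
      rw [Real.cos_sq]; ring_nf
    have h1 := Real.neg_one_le_cos y
    have := Real.cos_le_cos_of_nonneg_of_le_pi (abs_nonneg t) h ht
    rw [Real.cos_abs, Real.cos_abs] at this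
    rw [e, abs_of_nonneg (by linarith)]; linarith
  · rw [sub_zero, abs_of_nonneg (by linarith)]

lemma main {fc : ℝ → ℝ}
    (hfc : ∀ y : ℝ, fc y = if |y| ≤ Real.pi then 2 * Real.cos (y / 2) ^ 2 else 0)
    {δ s ε κ : ℝ} (hδ : 0 < δ) (hs0 : 0 < s) (hs : s ^ 2 = 1 - δ) (hε : 0 < ε)
    (hκ : 0 < κ) (hκ2 : κ ^ 2 * (s - (2 * s ^ 2 - 1)) = s + (2 * s ^ 2 - 1))
    (hεκ : ε * (s + (2 * s ^ 2 - 1)) = δ * κ) :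
    ∃ f : ℝ → ℝ, (∀ y : ℝ, 0 < f y) ∧
        (∀ y : ℝ, AnalyticAt ℝ f y) ∧
        (∀ y : ℝ, 3 * f y =
          deriv (fun w => f w * deriv f w) y + 2 * (f y) ^ 2
            + (3 * δ - 2 * δ ^ 2)) ∧
        Tendsto f atTop (nhds δ) ∧ Tendsto f atBot (nhds δ) ∧
        ∀ y, |f y - fc y| ≤ 2 * δ + 2 * ε + 4 / κ ^ 2 := by
  have hab : 0 < s + (2 * s ^ 2 - 1) := by
    have : 0 < δ * κ := by positivity
    rw [← hεκ] at this
    exact (pos_iff_pos_of_mul_pos this).1 hε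
  have hs1 : s < 1 := by nlinarith
  obtain ⟨e, he⟩ := exists_homeo hκ hε
  set W : ℝ → ℝ := fun y => e.symm y with hW
  have hWr : ∀ y, yy κ ε (W y) = y := fun y => by rw [← he]; exact e.apply_symm_apply y
  have hWc : ContDiff ℝ ω W := by
    have := e.toHomeomorph.contDiff_symm_deriv (n := ω)
      (f' := fun w => 2 * κ / dd κ w + 2 * ε) (fun w => ?_) (fun w => ?_) ?_
    · exact this
    · have := dd_pos κ w
      positivity
    · have := hasDeriv_yy κ ε w
      convert! this using 1
      ext x; exact he x
    · have := contDiff_yy κ ε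
      convert! this using 1
      ext x; exact he x
  have hWd : ∀ y, HasDerivAt W (2 * κ / dd κ (W y) + 2 * ε)⁻¹ y := by
    intro y
    refine HasDerivAt.of_local_left_inverse hWc.continuous.continuousAt (hasDeriv_yy κ ε (W y)) ?_
      (Eventually.of_forall hWr)
    have := dd_pos κ (W y)
    positivity
  set θ : ℝ → ℝ := fun y => th κ (W y) with hθ
  set f : ℝ → ℝ := fun y => s ^ 2 + s * Real.cos (θ y) with hf
  have hfδ : ∀ y, f y - δ = (s + (2 * s ^ 2 - 1)) / dd κ (W y) := by
    intro y
    have h1 := cos_th κ (W y)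
    have hd := (dd_pos κ (W y)).ne'
    have h2 : Real.cos (θ y) = 2 * Real.cosh (W y) ^ 2 / dd κ (W y) - 1 := by
      rw [← h1]; ring
    have h3 := Real.cosh_sq (W y)
    simp only [hf]
    rw [h2, eq_div_iff hd]
    have h4 : 2 * Real.cosh (W y) ^ 2 / dd κ (W y) * dd κ (W y) = 2 * Real.cosh (W y) ^ 2 := by
      field_simp
    have h5 : dd κ (W y) = 1 + Real.sinh (W y) ^ 2 + κ ^ 2 * Real.sinh (W y) ^ 2 := by
      unfold dd; rw [h3]; ring
    have : (s ^ 2 + s * (2 * Real.cosh (W y) ^ 2 / dd κ (W y) - 1) - δ) * dd κ (W y)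
      = (s ^ 2 - s - δ) * dd κ (W y) + s * (2 * Real.cosh (W y) ^ 2) := by
      linear_combination s * h4
    rw [this, h5, h3]
    have hδ' : δ = 1 - s ^ 2 := by linarith
    rw [hδ']
    linear_combination (-Real.sinh (W y) ^ 2) * hκ2
  have hpos : ∀ y, δ < f y := by
    intro y
    have := hfδ y
    have h2 : 0 < (s + (2 * s ^ 2 - 1)) / dd κ (W y) := div_pos hab (dd_pos _ _)
    linarith
  have hfp : ∀ y, 0 < f y := fun y => hδ.trans (hpos y)
  have hθd : ∀ y, HasDerivAt θ ((f y - δ) / f y) y := by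
    intro y
    have h1 := (hasDeriv_th κ (W y)).comp y (hWd y)
    convert! h1 using 1
    have hd := (dd_pos κ (W y))
    have hf0 := (hfp y).ne'
    have h2 := hfδ y
    have h3 : f y = δ + (s + (2 * s ^ 2 - 1)) / dd κ (W y) := by linarith
    rw [h2]
    have hA : s + (2 * s ^ 2 - 1) = δ * κ / ε := by rw [← hεκ]; field_simp
    rw [h3, hA]
    field_simp
    ring
  have hfd : ∀ y, HasDerivAt f (-(s * Real.sin (θ y)) * ((f y - δ) / f y)) y := by
    intro y
    have := ((hθd y).cos.const_mul s).const_add (s ^ 2)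
    convert! this using 1
    ring
  have hff : (fun w => f w * deriv f w) = fun w => -(s * Real.sin (θ w)) * (f w - δ) := by
    ext w
    rw [(hfd w).deriv]
    have := (hfp w).ne'
    field_simp
  refine ⟨f, hfp, ?_, ?_, ?_, ?_, ?_⟩
  · intro y
    have : ContDiff ℝ ω f :=
      contDiff_const.add (contDiff_const.mul (((contDiff_th κ).comp hWc).cos))
    exact this.contDiffAt.analyticAt
  · intro y
    rw [hff]
    have h1 := (((hθd y).sin.const_mul s).neg).mul ((hfd y).sub_const δ)
    have h2 : deriv (fun w => -(s * Real.sin (θ w)) * (f w - δ)) y = _ := h1.deriv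
    rw [h2]
    have hc : s * Real.cos (θ y) = f y - s ^ 2 := by simp [hf]
    have hsn : s ^ 2 * Real.sin (θ y) ^ 2 = s ^ 2 - (f y - s ^ 2) ^ 2 := by
      rw [← hc, Real.sin_sq]; ring
    have hf0 := (hfp y).ne'
    have hδ' : δ = 1 - s ^ 2 := by linarith
    have e1 : -(s * (Real.cos (θ y) * ((f y - δ) / f y))) * (f y - δ) +
        -(s * Real.sin (θ y)) * (-(s * Real.sin (θ y)) * ((f y - δ) / f y))
        = (-(f y - s ^ 2) * (f y - δ) + (s ^ 2 - (f y - s ^ 2) ^ 2)) * ((f y - δ) / f y) := by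
      rw [← hsn, ← hc]; ring
    simp only [Pi.neg_apply]
    rw [e1]
    have e2 : (-(f y - s ^ 2) * (f y - δ) + (s ^ 2 - (f y - s ^ 2) ^ 2))
        = f y * (3 - 2 * f y - 2 * δ) := by
      rw [hδ']; ring
    rw [e2]
    field_simp
    ring
  · have hW1 : Tendsto W atTop atTop := e.symm.tendsto_atTop
    have h2 : Tendsto (fun y => dd κ (W y)) atTop atTop :=
      tendsto_atTop_mono (fun y => dd_ge κ (W y)) ((tendsto_pow_atTop two_ne_zero).comp hW1)
    have h3 := (h2.const_div_atTop (s + (2 * s ^ 2 - 1))).const_add δ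
    rw [add_zero] at h3
    refine h3.congr fun y => ?_
    rw [← hfδ]; ring
  · have hW1 : Tendsto W atBot atBot := e.symm.tendsto_atBot
    have h2 : Tendsto (fun y => dd κ (W y)) atBot atTop := by
      refine tendsto_atTop_mono (fun y => dd_ge κ (W y)) ?_
      have := (tendsto_pow_atTop (α := ℝ) two_ne_zero).comp (tendsto_neg_atBot_atTop.comp hW1)
      refine this.congr fun y => ?_
      simp
    have h3 := (h2.const_div_atTop (s + (2 * s ^ 2 - 1))).const_add δ
    rw [add_zero] at h3
    refine h3.congr fun y => ?_
    rw [← hfδ]; ring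
  · intro y
    have h1 : |f y - (1 + Real.cos (θ y))| ≤ 2 * δ := by
      have hcl := Real.abs_cos_le_one (θ y)
      have e1 : f y - (1 + Real.cos (θ y)) = -δ + -((1 - s) * Real.cos (θ y)) := by
        simp only [hf]; rw [hs]; ring
      have h1s : 1 - s ≤ δ := by nlinarith
      rw [e1]
      refine (abs_add_le _ _).trans ?_
      rw [abs_neg, abs_neg, abs_mul, abs_of_pos hδ, abs_of_pos (a := 1 - s) (by linarith)]
      nlinarith [abs_nonneg (Real.cos (θ y))]
    have hk : 0 < 4 / κ ^ 2 := by positivity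
    have h2 : |1 + Real.cos (θ y) - fc y| ≤ 2 * ε + 4 / κ ^ 2 := by
      rcases le_total |W y| 1 with hw | hw
      · have := fc_bound1 hfc (y := y) (th_lt κ (W y))
        have e1 : th κ (W y) - y = -(2 * ε * W y) := by
          have := hWr y
          unfold yy at this; linarith
        rw [e1, abs_neg, abs_mul, abs_of_pos (a := 2 * ε) (by positivity)] at this
        have h3 : 2 * ε * |W y| ≤ 2 * ε := by nlinarith
        have h4 : |1 + Real.cos (θ y) - fc y| ≤ 2 * ε * |W y| := this
        linarith
      · have h3 := fc_bound2 hfc (t := θ y) (y := y) (by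
          have := abs_th_le (w := W y) hκ hε
          rwa [hWr] at this)
        have h4 : 1 + Real.cos (θ y) ≤ 4 / κ ^ 2 := by
          have h5 : 1 + Real.cos (θ y) = _ := cos_th κ (W y)
          rw [h5, div_le_div_iff₀ (dd_pos _ _) (by positivity)]
          have h6 : 1 ≤ Real.sinh (W y) ^ 2 := by
            rw [one_le_sq_iff_one_le_abs, Real.abs_sinh]
            exact hw.trans (Real.self_le_sinh_iff.2 (abs_nonneg _))
          have h7 := Real.cosh_sq (W y)
          unfold dd
          rw [h7]
          have : 0 ≤ κ ^ 2 * (Real.sinh (W y) ^ 2 - 1) := mul_nonneg (by positivity) (by linarith)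
          nlinarith
        linarith
    have := abs_add_le (f y - (1 + Real.cos (θ y))) (1 + Real.cos (θ y) - fc y)
    have e1 : f y - (1 + Real.cos (θ y)) + (1 + Real.cos (θ y) - fc y) = f y - fc y := by ring
    rw [e1] at this
    linarith

lemma main2 {fc : ℝ → ℝ}
    (hfc : ∀ y : ℝ, fc y = if |y| ≤ Real.pi then 2 * Real.cos (y / 2) ^ 2 else 0)
    (δ : ℝ) (hδ : δ ∈ Ioo (0 : ℝ) (1 / 2)) :
    ∃ f : ℝ → ℝ, (∀ y : ℝ, 0 < f y) ∧
        (∀ y : ℝ, AnalyticAt ℝ f y) ∧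
        (∀ y : ℝ, 3 * f y =
          deriv (fun w => f w * deriv f w) y + 2 * (f y) ^ 2
            + (3 * δ - 2 * δ ^ 2)) ∧
        Tendsto f atTop (nhds δ) ∧ Tendsto f atBot (nhds δ) ∧
        ∀ y, |f y - fc y| ≤ 2 * δ + 2 * √(δ / (3 - 4 * δ)) +
          4 * ((√(1 - δ) - (2 * (1 - δ) - 1)) / (√(1 - δ) + (2 * (1 - δ) - 1))) := by
  obtain ⟨h0, h1⟩ := hδ
  set s := √(1 - δ) with hsd
  have hs : s ^ 2 = 1 - δ := Real.sq_sqrt (by linarith)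
  have hs0 : 0 < s := Real.sqrt_pos.2 (by linarith)
  have h34 : 0 < 3 - 4 * δ := by linarith
  set ε := √(δ / (3 - 4 * δ)) with hεd
  have hε : 0 < ε := Real.sqrt_pos.2 (by positivity)
  have hε2 : ε ^ 2 = δ / (3 - 4 * δ) := Real.sq_sqrt (by positivity)
  have hA : 0 < s + (2 * s ^ 2 - 1) := by rw [hs]; linarith
  have hs1 : s < 1 := by nlinarith
  have hB : 0 < s - (2 * s ^ 2 - 1) := by nlinarith
  have hAB : (s + (2 * s ^ 2 - 1)) * (s - (2 * s ^ 2 - 1)) = δ * (3 - 4 * δ) := by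
    have : δ = 1 - s ^ 2 := by linarith
    rw [this]; ring
  have hκ2 : (ε * (s + (2 * s ^ 2 - 1)) / δ) ^ 2 * (s - (2 * s ^ 2 - 1)) = s + (2 * s ^ 2 - 1) := by
    have : (ε * (s + (2 * s ^ 2 - 1)) / δ) ^ 2 * (s - (2 * s ^ 2 - 1))
      = ε ^ 2 / δ ^ 2 * (s + (2 * s ^ 2 - 1)) *
        ((s + (2 * s ^ 2 - 1)) * (s - (2 * s ^ 2 - 1))) := by ring
    rw [this, hAB, hε2]
    generalize 3 - 4 * δ = q at h34
    field_simp
  obtain ⟨f, a1, a2, a3, a4, a5, a6⟩ := main hfc (κ := ε * (s + (2 * s ^ 2 - 1)) / δ) h0 hs0 hs hε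
    (by positivity) hκ2 (by field_simp)
  refine ⟨f, a1, a2, a3, a4, a5, fun y => (a6 y).trans (le_of_eq ?_)⟩
  rw [← hs]
  have : (ε * (s + (2 * s ^ 2 - 1)) / δ) ^ 2 = (s + (2 * s ^ 2 - 1)) / (s - (2 * s ^ 2 - 1)) := by
    rw [eq_div_iff hB.ne']; exact hκ2
  rw [this]
  field_simp

end K22

/-- for all small `δ > 0`, the integrated travelling-wave ODE
`3f = (f f′)′ + 2f² + C_δ`, `C_δ = 3δ − 2δ²`, of the K(2,2) equation has a
strictly positive real-analytic solution `f_δ` with `f_δ(±∞) = δ`, and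
`f_δ → f_c` uniformly on ℝ as `δ → 0⁺`: the Rosenau–Hyman compacton profile
is the uniform limit of smooth positive travelling-wave profiles. -/
theorem stmt14
    (fc : ℝ → ℝ)
    (hfc : ∀ y : ℝ, fc y = if |y| ≤ Real.pi then 2 * Real.cos (y / 2) ^ 2 else 0) :
    ∃ δ₀ > (0:ℝ), ∃ F : ℝ → ℝ → ℝ,
      (∀ δ ∈ Ioo (0:ℝ) δ₀,
        (∀ y : ℝ, 0 < F δ y) ∧
        (∀ y : ℝ, AnalyticAt ℝ (F δ) y) ∧
        (∀ y : ℝ, 3 * F δ y =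
          deriv (fun w => F δ w * deriv (F δ) w) y + 2 * (F δ y) ^ 2
            + (3 * δ - 2 * δ ^ 2)) ∧
        Tendsto (F δ) atTop (nhds δ) ∧ Tendsto (F δ) atBot (nhds δ)) ∧
      TendstoUniformly F fc (nhdsWithin 0 (Ioi 0)) := by
  have key := K22.main2 hfc
  choose! F h1 h2 h3 h4 h5 h6 using key
  refine ⟨1 / 2, by norm_num, F, fun δ hδ => ⟨h1 δ hδ, h2 δ hδ, h3 δ hδ, h4 δ hδ, h5 δ hδ⟩, ?_⟩
  have hB : Tendsto (fun δ : ℝ => 2 * δ + 2 * √(δ / (3 - 4 * δ)) +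
          4 * ((√(1 - δ) - (2 * (1 - δ) - 1)) / (√(1 - δ) + (2 * (1 - δ) - 1))))
      (nhdsWithin 0 (Ioi 0)) (nhds 0) := by
    have hc : ContinuousAt (fun δ : ℝ => 2 * δ + 2 * √(δ / (3 - 4 * δ)) +
          4 * ((√(1 - δ) - (2 * (1 - δ) - 1)) / (√(1 - δ) + (2 * (1 - δ) - 1)))) 0 := by
      refine ContinuousAt.add (ContinuousAt.add (by fun_prop) (ContinuousAt.mul (by fun_prop)
        (ContinuousAt.sqrt (ContinuousAt.div (by fun_prop) (by fun_prop) (by norm_num)))))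
        (ContinuousAt.mul (by fun_prop)
          (ContinuousAt.div (by fun_prop) (by fun_prop) (by norm_num)))
    have := hc.tendsto.mono_left (nhdsWithin_le_nhds (s := Ioi 0))
    norm_num at this
    exact this
  rw [Metric.tendstoUniformly_iff]
  intro η hη
  filter_upwards [hB.eventually (gt_mem_nhds hη),
    Ioo_mem_nhdsGT (show (0 : ℝ) < 1 / 2 by norm_num)] with δ hd hδ y
  rw [dist_comm, Real.dist_eq]
  exact (h6 δ hδ y).trans_lt hd
end

section
/- Fix an integer m ≥ 0 and a real λ ≠ 0, and define f_λ(y) := (e^{−y/λ^{2m+2}} − 1)/(e^{−y/λ^{2m+2}} + 1). Then: (i) f_λ is real analytic and satisfies λ^{2m+2} f_λ′(y) = −(1/2)(1 − f_λ(y)²) for all y ∈ ℝ; (ii) the travelling wave u(x,t) := f_λ(x − λt) is a classical solution of the (2m+2)-th-order-in-time NDE ∂_t^{2m+2} u = ∂_x^{2m}(u u_x) on ℝ × ℝ; (iii) for every y ≠ 0, f_λ(y) → −sign(y) as λ → 0⁺, i.e. the smooth travelling waves converge pointwise (away from the jump) to the stationary shock S₋(y) = −sign(y). -/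
open Set Filter

/-- the explicit analytic travelling waves
`f_λ(y) = (e^{−y/λ^{2m+2}} − 1)/(e^{−y/λ^{2m+2}} + 1)` satisfy
`λ^{2m+2} f_λ′ = −(1/2)(1 − f_λ²)`, give classical solutions
`u(x,t) = f_λ(x − λt)` of `∂_t^{2m+2} u = ∂_x^{2m}(u u_x)`, and converge
pointwise (away from 0) to the stationary shock `S₋(y) = −sign y` as
`λ → 0⁺`. -/
theorem stmt15
    (m : ℕ) (lam : ℝ) (hlam : lam ≠ 0)
    (F : ℝ → ℝ → ℝ)
    (hF : ∀ l y : ℝ, F l y =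
      (Real.exp (-y / l ^ (2 * m + 2)) - 1) / (Real.exp (-y / l ^ (2 * m + 2)) + 1)) :
    (∀ y : ℝ, AnalyticAt ℝ (F lam) y) ∧
    (∀ y : ℝ, lam ^ (2 * m + 2) * deriv (F lam) y = -(1/2) * (1 - (F lam y) ^ 2)) ∧
    (∀ x t : ℝ,
      iteratedDeriv (2 * m + 2) (fun s => F lam (x - lam * s)) t =
        iteratedDeriv (2 * m)
          (fun y => F lam (y - lam * t) * deriv (fun z => F lam (z - lam * t)) y) x) ∧
    (∀ y : ℝ, y ≠ 0 →
      Tendsto (fun l => F l y) (nhdsWithin 0 (Ioi 0)) (nhds (-Real.sign y))) := by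
  have hL : lam ^ (2 * m + 2) ≠ 0 := pow_ne_zero _ hlam
  have hFe : F lam = fun y => (Real.exp (-y / lam ^ (2 * m + 2)) - 1) /
      (Real.exp (-y / lam ^ (2 * m + 2)) + 1) := funext (hF lam)
  have hpos : ∀ a : ℝ, Real.exp a + 1 ≠ 0 := fun a => by positivity
  have hA : ∀ y : ℝ, AnalyticAt ℝ (F lam) y := by
    intro y
    rw [hFe]
    have he : AnalyticAt ℝ (fun y : ℝ => Real.exp (-y / lam ^ (2 * m + 2))) y := by
      apply AnalyticAt.rexp
      exact (analyticAt_id.neg).div analyticAt_const hL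
    exact (he.sub analyticAt_const).div (he.add analyticAt_const) (hpos _)
  have hD : ∀ y : ℝ, lam ^ (2 * m + 2) * deriv (F lam) y
      = -(1/2) * (1 - (F lam y) ^ 2) := by
    intro y
    have he : HasDerivAt (fun y : ℝ => Real.exp (-y / lam ^ (2 * m + 2)))
        (Real.exp (-y / lam ^ (2 * m + 2)) * (-1 / lam ^ (2 * m + 2))) y :=
      (((hasDerivAt_id y).neg).div_const _).exp
    have hd := (he.sub_const 1).fun_div (he.add_const 1) (hpos _)
    rw [hFe, hd.deriv]
    beta_reduce
    have := hpos (-y / lam ^ (2 * m + 2))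
    generalize Real.exp (-y / lam ^ (2 * m + 2)) = E at *
    generalize lam ^ (2 * m + 2) = L at *
    field_simp
    ring
  refine ⟨hA, hD, ?_, ?_⟩
  · intro x t
    have hC : ∀ n : ℕ, ContDiff ℝ n (F lam) := fun n =>
      contDiff_iff_contDiffAt.2 fun y => (hA y).contDiffAt
    have hdiff : Differentiable ℝ (F lam) := fun y => (hA y).differentiableAt
    have h2 : (fun y => F lam y * deriv (F lam) y)
        = fun y => lam ^ (2 * m + 2) * deriv (deriv (F lam)) y := by
      funext y
      have h3 : deriv (F lam) = fun y => (lam ^ (2 * m + 2))⁻¹ *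
          (-(1/2) * (1 - (F lam y) ^ 2)) := by
        funext z
        rw [← hD z, inv_mul_cancel_left₀ hL]
      have h4 : HasDerivAt (fun y => (lam ^ (2 * m + 2))⁻¹ *
          (-(1/2) * (1 - (F lam y) ^ 2))) _ y :=
        (((((hdiff y).hasDerivAt).pow 2).const_sub 1).const_mul (-(1/2))).const_mul _
      have h5 : deriv (deriv (F lam)) y = _ := (congrArg (fun g => deriv g y) h3).trans h4.deriv
      rw [h5, mul_inv_cancel_left₀ hL]
      push_cast
      ring
    have hR : (fun y => F lam (y - lam * t) * deriv (fun z => F lam (z - lam * t)) y)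
        = fun y => (fun y => lam ^ (2 * m + 2) * deriv (deriv (F lam)) y) (y - lam * t) := by
      rw [← h2]
      funext y
      rw [deriv_comp_sub_const]
    have hS : (fun s => F lam (x - lam * s)) = fun s => (fun z => F lam (x - z)) (lam * s) := rfl
    rw [hR, iteratedDeriv_comp_sub_const (2 * m)
      (fun y => lam ^ (2 * m + 2) * deriv (deriv (F lam)) y) (lam * t)]
    beta_reduce
    rw [iteratedDeriv_const_mul_field,
      ← iteratedDeriv_succ', ← iteratedDeriv_succ', hS,
      iteratedDeriv_comp_const_mul (f := fun z => F lam (x - z)) ((hC _).comp (contDiff_const.sub contDiff_id)),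
      iteratedDeriv_comp_const_sub (2 * m + 2) (F lam) x]
    have hev : (-1 : ℝ) ^ (2 * m + 2) = 1 := Even.neg_one_pow ⟨m + 1, by ring⟩
    simp only [hev, one_smul]
  · have key : ∀ y : ℝ, 0 < y →
        Tendsto (fun l => F l y) (nhdsWithin 0 (Ioi 0)) (nhds (-1)) := by
      intro y hy
      have h1 : Tendsto (fun l : ℝ => l ^ (2 * m + 2)) (nhdsWithin 0 (Ioi 0))
          (nhdsWithin 0 (Ioi 0)) := by
        apply tendsto_nhdsWithin_of_tendsto_nhds_of_eventually_within
        · have : Tendsto (fun l : ℝ => l ^ (2 * m + 2)) (nhds 0) (nhds (0 ^ (2 * m + 2))) :=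
            (continuous_pow _).tendsto 0
          rw [zero_pow (by omega)] at this
          exact this.mono_left nhdsWithin_le_nhds
        · filter_upwards [self_mem_nhdsWithin] with l hl
          exact pow_pos (mem_Ioi.1 hl) _
      have h2 : Tendsto (fun l : ℝ => -y / l ^ (2 * m + 2)) (nhdsWithin 0 (Ioi 0)) atBot := by
        simp only [div_eq_mul_inv]
        exact (tendsto_inv_nhdsGT_zero.comp h1).const_mul_atTop_of_neg (by linarith)
      have h3 := Real.tendsto_exp_atBot.comp h2
      have h4 := (h3.sub_const 1).div (h3.add_const 1) (by norm_num)
      norm_num at h4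
      refine h4.congr fun l => ?_
      simp [hF]
    intro y hy
    rcases lt_or_gt_of_ne hy with h | h
    · rw [Real.sign_of_neg h]
      have h6 := (key (-y) (by linarith)).neg
      refine h6.congr fun l => ?_
      rw [hF, hF, neg_neg, neg_div, Real.exp_neg]
      have := Real.exp_pos (y / l ^ (2 * m + 2))
      field_simp
      ring
    · rw [Real.sign_of_pos h]
      exact key y h
end

section
/- Let α := 415/2574 and a := 6!/13!. Then for every constant C ∈ ℝ the polynomial g(z) := C z + a z⁷ satisfies the seventh-order similarity equation (g g′)^{(6)}(z) = ((1+α)/7) z g′(z) − α g(z) for all z ∈ ℝ. -/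
open Set Filter

/-- with `α = 415/2574` and `a = 6!/13!`, every polynomial
`g(z) = C z + a z⁷` solves the seventh-order similarity equation
`(g g′)^{(6)} = ((1+α)/7) z g′ − α g` on all of ℝ. -/
theorem stmt17 (C α a : ℝ)
    (hα : α = 415 / 2574)
    (ha : a = (Nat.factorial 6 : ℝ) / (Nat.factorial 13 : ℝ))
    (g : ℝ → ℝ) (hgdef : ∀ z : ℝ, g z = C * z + a * z ^ 7) :
    ∀ z : ℝ, iteratedDeriv 6 (fun w => g w * deriv g w) z =
      ((1 + α) / 7) * z * deriv g z - α * g z := by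
  have hg : g = fun z => C * z + a * z ^ 7 := funext hgdef
  have hd : ∀ z, deriv g z = C + 7 * a * z ^ 6 := by
    intro z
    have h : HasDerivAt g (C * 1 + a * (((7 : ℕ) : ℝ) * z ^ 6)) z := by
      rw [hg]
      exact ((hasDerivAt_id z).const_mul C).add ((hasDerivAt_pow 7 z).const_mul a)
    rw [h.deriv]
    push_cast
    ring
  have step : ∀ (p q r : ℝ) (k l m : ℕ),
      deriv (fun z : ℝ => p * z ^ k + q * z ^ l + r * z ^ m) =
        fun z => (p * k) * z ^ (k - 1) + (q * l) * z ^ (l - 1) + (r * m) * z ^ (m - 1) := by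
    intro p q r k l m
    funext z
    have h := (((hasDerivAt_pow k z).const_mul p).add ((hasDerivAt_pow l z).const_mul q)).add
      ((hasDerivAt_pow m z).const_mul r)
    refine (HasDerivAt.deriv h).trans ?_
    ring
  have hf : (fun w => g w * deriv g w) =
      fun z => C ^ 2 * z ^ 1 + (8 * a * C) * z ^ 7 + (7 * a ^ 2) * z ^ 13 := by
    funext w
    rw [hd, hgdef]
    ring
  intro z
  rw [hf]
  simp only [iteratedDeriv_succ', iteratedDeriv_zero, step]
  rw [hd, hgdef, ha, hα]
  norm_num [Nat.factorial]
  ring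
end
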